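/- arXiv:2409.07097 — 5 statements merged into one kernel-verified Lean document; each statement's English description precedes it below -/
import Mathlib

section
/- Let G = (V,E,w,μ,κ) be a finite connected weighted graph with nonnegative potential κ ≥ 0, and let ℓ = |E| − |V| + 1 be its cyclomatic number. Then for every integer k with ℓ + 1 ≤ k ≤ n, the (k−ℓ)-way Cheeger constant satisfies ρ_{k−ℓ}(G) ≤ √(2 τ_G λ_k(G)). -/
open BigOperators Matrix Polynomial

/-- Conductance of a vertex subset `A`: boundary weight divided by its measure. -/
noncomputable def conductance {V : Type*} [Fintype V] [DecidableEq V]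
    (w : V → V → ℝ) (μ : V → ℝ) (A : Finset V) : ℝ :=
  (∑ i ∈ A, ∑ j ∈ Aᶜ, w i j) / (∑ i ∈ A, μ i)

/-- The `k`-way Cheeger constant: infimum over `k`-tuples of pairwise disjoint
nonempty vertex subsets of the maximal conductance. -/
noncomputable def cheeger {V : Type*} [Fintype V] [DecidableEq V]
    (k : ℕ) (w : V → V → ℝ) (μ : V → ℝ) : ℝ :=
  sInf {r | ∃ A : Fin k → Finset V, (∀ i, (A i).Nonempty) ∧
    Pairwise (Function.onFun Disjoint A) ∧ r = ⨆ i, conductance w μ (A i)}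

/-- Weighted degree `d(i) = ∑_j w_{ij}` (with `w` vanishing off edges). -/
noncomputable def wdeg {V : Type*} [Fintype V] (w : V → V → ℝ) (i : V) : ℝ := ∑ j, w i j

/-- The normalized Laplacian `𝔏 = M⁻¹ (D + K - A)`. -/
noncomputable def normLap {V : Type*} [Fintype V] [DecidableEq V]
    (w : V → V → ℝ) (μ κ : V → ℝ) : Matrix V V ℝ :=
  (Matrix.diagonal μ)⁻¹ *
    (Matrix.diagonal (wdeg w) + Matrix.diagonal κ - Matrix.of w)

/-- `τ_G = max_i d(i)/μ_i`. -/
noncomputable def tauMax {V : Type*} [Fintype V] (w : V → V → ℝ) (μ : V → ℝ) : ℝ :=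
  ⨆ i, wdeg w i / μ i


namespace MWC

variable {V : Type*} [Fintype V] [DecidableEq V]

/-- Quadratic form of the Laplacian. -/
noncomputable def QF (w : V → V → ℝ) (κ : V → ℝ) (f : V → ℝ) : ℝ :=
  (∑ i, ∑ j, w i j * (f i - f j) ^ 2) / 2 + ∑ i, κ i * f i ^ 2

/-- The set `S` carries a test function with Rayleigh quotient at most `t`. -/
def Good (w : V → V → ℝ) (κ μ : V → ℝ) (t : ℝ) (S : Finset V) : Prop :=
  ∃ f : V → ℝ, f ≠ 0 ∧ (∀ i, i ∉ S → f i = 0) ∧ QF w κ f ≤ t * ∑ i, μ i * f i ^ 2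

theorem Good.nonempty {w : V → V → ℝ} {κ μ : V → ℝ} {t : ℝ} {S : Finset V}
    (h : Good w κ μ t S) : S.Nonempty := by
  obtain ⟨f, hf, hs, -⟩ := h
  by_contra hS
  rw [Finset.not_nonempty_iff_eq_empty] at hS
  subst hS
  exact hf (funext fun i => hs i (by simp))

theorem QF_zero (w : V → V → ℝ) (κ : V → ℝ) : QF w κ 0 = 0 := by
  simp [QF]

theorem good_split {w : V → V → ℝ} (hsymm : ∀ i j, w i j = w j i) {κ μ : V → ℝ} {t : ℝ}
    {S S₁ S₂ : Finset V} (hS : S ⊆ S₁ ∪ S₂) (hd : Disjoint S₁ S₂)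
    (hsep : ∀ i ∈ S₁, ∀ j ∈ S₂, w i j = 0) (h : Good w κ μ t S) :
    Good w κ μ t S₁ ∨ Good w κ μ t S₂ := by
  obtain ⟨f, hf, hs, hq⟩ := h
  by_contra hcon
  push Not at hcon
  obtain ⟨h1, h2⟩ := hcon
  set f1 : V → ℝ := fun i => if i ∈ S₁ then f i else 0 with hf1
  set f2 : V → ℝ := fun i => if i ∈ S₂ then f i else 0 with hf2
  have hsum : ∀ i, f i = f1 i + f2 i := by
    intro i
    simp only [hf1, hf2]
    by_cases a : i ∈ S₁
    · have b : i ∉ S₂ := Finset.disjoint_left.1 hd a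
      simp [a, b]
    · by_cases b : i ∈ S₂
      · simp [a, b]
      · have : i ∉ S := fun hi => by
          have := hS hi
          simp [a, b] at this
        simp [a, b, hs i this]
  have h12 : ∀ i, f1 i * f2 i = 0 := by
    intro i
    simp only [hf1, hf2]
    by_cases a : i ∈ S₁
    · have b : i ∉ S₂ := Finset.disjoint_left.1 hd a
      simp [b]
    · simp [a]
  have hw12 : ∀ i j, w i j * (f1 i * f2 j) = 0 := by
    intro i j
    simp only [hf1, hf2]
    by_cases a : i ∈ S₁
    · by_cases b : j ∈ S₂
      · simp [hsep i a j b]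
      · simp [b]
    · simp [a]
  have hQ : QF w κ f = QF w κ f1 + QF w κ f2 := by
    have e1 : ∀ i j, w i j * (f i - f j) ^ 2 =
        w i j * (f1 i - f1 j) ^ 2 + w i j * (f2 i - f2 j) ^ 2 := by
      intro i j
      rw [hsum i, hsum j]
      have a := hw12 i j
      have b := hw12 j i
      rw [hsymm j i] at b
      linear_combination (2 * w i j) * h12 i + (2 * w i j) * h12 j - 2 * a - 2 * b
    have e2 : ∀ i, κ i * f i ^ 2 = κ i * f1 i ^ 2 + κ i * f2 i ^ 2 := by
      intro i
      rw [hsum i]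
      linear_combination (2 * κ i) * h12 i
    simp only [QF, e1, e2, Finset.sum_add_distrib]
    ring
  have hN : ∑ i, μ i * f i ^ 2 = ∑ i, μ i * f1 i ^ 2 + ∑ i, μ i * f2 i ^ 2 := by
    rw [← Finset.sum_add_distrib]
    refine Finset.sum_congr rfl fun i _ => ?_
    rw [hsum i]
    linear_combination (2 * μ i) * h12 i
  have k1 : f1 ≠ 0 → t * ∑ i, μ i * f1 i ^ 2 < QF w κ f1 := by
    intro hne
    by_contra hlt
    exact h1 ⟨f1, hne, fun i hi => by simp [hf1, hi], not_lt.1 hlt⟩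
  have k2 : f2 ≠ 0 → t * ∑ i, μ i * f2 i ^ 2 < QF w κ f2 := by
    intro hne
    by_contra hlt
    exact h2 ⟨f2, hne, fun i hi => by simp [hf2, hi], not_lt.1 hlt⟩
  rw [hQ, hN, mul_add] at hq
  by_cases z1 : f1 = 0
  · by_cases z2 : f2 = 0
    · apply hf
      funext i
      rw [hsum i, z1, z2]
      simp
    · have := k2 z2
      rw [z1, QF_zero] at hq
      simp at hq
      linarith
  · have := k1 z1
    by_cases z2 : f2 = 0
    · rw [z2, QF_zero] at hq
      simp at hq
      linarith
    · have := k2 z2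
      linarith

/-- Key step: inside a good forest there is a good piece `S` attached through one vertex `v`,
with `S \ {v}` not good. -/
theorem exists_piece {w : V → V → ℝ} (hsymm : ∀ i j, w i j = w j i) {κ μ : V → ℝ} {t : ℝ}
    {H : SimpleGraph V} (hH : H.IsAcyclic) {W : Finset V}
    (hW : ∀ i ∈ W, ∀ j ∈ W, w i j ≠ 0 → i ≠ j → H.Adj i j) (hg : Good w κ μ t W) :
    ∃ S ⊆ W, ∃ v ∈ S, Good w κ μ t S ∧ ¬ Good w κ μ t (S.erase v) ∧
      ∀ i ∈ S.erase v, ∀ j ∈ W \ S, w i j = 0 := by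
  classical
  let F : Finset (Finset V) := W.powerset.filter fun S =>
    Good w κ μ t S ∧ ∃ v ∈ S, ∀ i ∈ S.erase v, ∀ j ∈ W \ S, w i j = 0
  have hF : F.Nonempty := by
    obtain ⟨v, hv⟩ := hg.nonempty
    exact ⟨W, by simp only [F, Finset.mem_filter, Finset.mem_powerset]
                 exact ⟨subset_rfl, hg, v, hv, by simp⟩⟩
  obtain ⟨S, hSF, hmin⟩ := Finset.exists_min_image F Finset.card hF
  obtain ⟨hSW, hSg, v, hvS, hsep⟩ : S ⊆ W ∧ Good w κ μ t S ∧
      ∃ v ∈ S, ∀ i ∈ S.erase v, ∀ j ∈ W \ S, w i j = 0 := by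
    simpa [F] using hSF
  refine ⟨S, hSW, v, hvS, hSg, ?_, hsep⟩
  intro hgood
  let F' : Finset (Finset V) := (S.erase v).powerset.filter fun C =>
    Good w κ μ t C ∧ ∀ i ∈ C, ∀ j ∈ S.erase v \ C, w i j = 0
  have hF' : F'.Nonempty :=
    ⟨S.erase v, by simp only [F', Finset.mem_filter, Finset.mem_powerset]
                   exact ⟨subset_rfl, hgood, by simp⟩⟩
  obtain ⟨C, hCF, hCmin⟩ := Finset.exists_min_image F' Finset.card hF'
  obtain ⟨hCS, hCg, hCsep⟩ : C ⊆ S.erase v ∧ Good w κ μ t C ∧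
      ∀ i ∈ C, ∀ j ∈ S.erase v \ C, w i j = 0 := by
    simp only [F', Finset.mem_filter, Finset.mem_powerset] at hCF
    exact hCF
  have hCv : ∀ x ∈ C, x ≠ v := fun x hx => (Finset.mem_erase.1 (hCS hx)).1
  have hCS' : ∀ x ∈ C, x ∈ S := fun x hx => (Finset.mem_erase.1 (hCS hx)).2
  have huniq : ∀ a ∈ C, ∀ b ∈ C, w a v ≠ 0 → w b v ≠ 0 → a = b := by
    intro a ha b hb hav hbv
    by_contra hab
    have hadj : H.Adj a v := hW a (hSW (hCS' a ha)) v (hSW hvS) hav (hCv a ha)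
    have hadjb : H.Adj b v := hW b (hSW (hCS' b hb)) v (hSW hvS) hbv (hCv b hb)
    have hbr := SimpleGraph.isAcyclic_iff_forall_adj_isBridge.1 hH hadj
    rw [SimpleGraph.isBridge_iff] at hbr
    let K := H \ SimpleGraph.fromEdgeSet {s(a, v)}
    let T := C.filter fun x => K.Reachable a x
    have hTsep : ∀ x ∈ T, ∀ y ∈ C \ T, w x y = 0 := by
      intro x hx y hy
      by_contra hxy
      simp only [T, Finset.mem_filter, Finset.mem_sdiff, not_and] at hx hy
      have hne : x ≠ y := by
        rintro rfl
        exact hy.2 hy.1 hx.2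
      have hxyH : H.Adj x y := hW x (hSW (hCS' x hx.1)) y (hSW (hCS' y hy.1)) hxy hne
      apply hy.2 hy.1
      refine hx.2.trans (SimpleGraph.Adj.reachable ?_)
      simp only [K, SimpleGraph.sdiff_adj, SimpleGraph.fromEdgeSet_adj]
      refine ⟨hxyH, fun h => ?_⟩
      have h1 := h.1
      simp only [Set.mem_singleton_iff, Sym2.eq_iff] at h1
      rcases h1 with h1 | h1
      · exact hCv y hy.1 h1.2
      · exact hCv x hx.1 h1.1
    have haT : a ∈ T := by simp only [T, Finset.mem_filter]; exact ⟨ha, SimpleGraph.Reachable.refl _⟩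
    have hTC : T ⊆ C := Finset.filter_subset _ _
    have hbT : b ∈ T := by
      by_contra hbT
      rcases good_split hsymm (S := C) (S₁ := T) (S₂ := C \ T)
        (by rw [Finset.union_sdiff_of_subset hTC]) Finset.disjoint_sdiff hTsep hCg with h | h
      · have hm : T ∈ F' := by
          simp only [F', Finset.mem_filter, Finset.mem_powerset]
          refine ⟨hTC.trans hCS, h, fun i hi j hj => ?_⟩
          by_cases hjC : j ∈ C
          · exact hTsep i hi j (Finset.mem_sdiff.2 ⟨hjC, (Finset.mem_sdiff.1 hj).2⟩)
          · exact hCsep i (hTC hi) j (Finset.mem_sdiff.2 ⟨(Finset.mem_sdiff.1 hj).1, hjC⟩)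
        have := hCmin _ hm
        have hlt : T.card < C.card := Finset.card_lt_card
          ⟨hTC, fun hh => hbT (hh hb)⟩
        omega
      · have hm : C \ T ∈ F' := by
          simp only [F', Finset.mem_filter, Finset.mem_powerset]
          refine ⟨Finset.sdiff_subset.trans hCS, h, fun i hi j hj => ?_⟩
          by_cases hjC : j ∈ C
          · have hjT : j ∈ T := by
              by_contra hjT
              exact (Finset.mem_sdiff.1 hj).2 (Finset.mem_sdiff.2 ⟨hjC, hjT⟩)
            rw [hsymm]
            exact hTsep j hjT i hi
          · exact hCsep i (Finset.sdiff_subset hi) j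
              (Finset.mem_sdiff.2 ⟨(Finset.mem_sdiff.1 hj).1, hjC⟩)
        have := hCmin _ hm
        have hlt : (C \ T).card < C.card := Finset.card_lt_card
          ⟨Finset.sdiff_subset, fun hh => (Finset.mem_sdiff.1 (hh ha)).2 haT⟩
        omega
    have hbT2 : K.Reachable a b := (Finset.mem_filter.1 hbT).2
    have hKb : K.Adj b v := by
      simp only [K, SimpleGraph.sdiff_adj, SimpleGraph.fromEdgeSet_adj]
      refine ⟨hadjb, fun h => ?_⟩
      have h1 := h.1
      simp only [Set.mem_singleton_iff, Sym2.eq_iff] at h1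
      rcases h1 with h1 | h1
      · exact hab h1.1.symm
      · exact hCv b hb h1.1
    exact hbr (hbT2.trans hKb.reachable)
  obtain ⟨u, huC, hu⟩ : ∃ u ∈ C, ∀ i ∈ C, i ≠ u → w i v = 0 := by
    by_cases hex : ∃ u ∈ C, w u v ≠ 0
    · obtain ⟨u, huC, hu⟩ := hex
      refine ⟨u, huC, fun i hi hne => ?_⟩
      by_contra hiv
      exact hne (huniq i hi u huC hiv hu)
    · push Not at hex
      obtain ⟨u, hu⟩ := hCg.nonempty
      exact ⟨u, hu, fun i hi _ => hex i hi⟩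
  have hm : C ∈ F := by
    simp only [F, Finset.mem_filter, Finset.mem_powerset]
    refine ⟨fun x hx => hSW (hCS' x hx), hCg, u, huC, fun i hi j hj => ?_⟩
    obtain ⟨hiu, hiC⟩ := Finset.mem_erase.1 hi
    obtain ⟨hjW, hjC⟩ := Finset.mem_sdiff.1 hj
    by_cases hjS : j ∈ S
    · by_cases hjv : j = v
      · rw [hjv]; exact hu i hiC hiu
      · exact hCsep i hiC j (Finset.mem_sdiff.2 ⟨Finset.mem_erase.2 ⟨hjv, hjS⟩, hjC⟩)
    · exact hsep i (hCS hiC) j (Finset.mem_sdiff.2 ⟨hjW, hjS⟩)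
  have h1 := hmin _ hm
  have h2 := Finset.card_le_card hCS
  have h3 := Finset.card_erase_lt_of_mem hvS
  omega

theorem forest_decomp {w : V → V → ℝ} (hsymm : ∀ i j, w i j = w j i) {κ μ : V → ℝ} {t : ℝ}
    {H : SimpleGraph V} (hH : H.IsAcyclic) : ∀ (m : ℕ) (W : Finset V), W.card ≤ m →
    (∀ i ∈ W, ∀ j ∈ W, w i j ≠ 0 → i ≠ j → H.Adj i j) →
    ∃ R ⊆ W, ∃ A : V → Finset V, (∀ v ∈ R, A v ⊆ W ∧ Good w κ μ t (A v)) ∧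
      (∀ u ∈ R, ∀ v ∈ R, u ≠ v → Disjoint (A u) (A v)) ∧ ¬ Good w κ μ t (W \ R) := by
  intro m
  induction m with
  | zero =>
    intro W hc _
    have : W = ∅ := Finset.card_eq_zero.1 (by omega)
    subst this
    exact ⟨∅, by simp, fun _ => ∅, by simp, by simp, fun h => by simpa using h.nonempty⟩
  | succ m ih =>
    intro W hc hW
    by_cases hg : Good w κ μ t W
    · obtain ⟨S, hSW, v, hvS, hSg, hSv, hsep⟩ := exists_piece hsymm hH hW hg
      have hlt : (W \ S).card < W.card := Finset.card_lt_card
        ⟨Finset.sdiff_subset, fun hh => (Finset.mem_sdiff.1 (hh (hSW hvS))).2 hvS⟩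
      obtain ⟨R, hRW, A, hA, hdis, hng⟩ := ih (W \ S) (by omega)
        (fun i hi j hj => hW i (Finset.sdiff_subset hi) j (Finset.sdiff_subset hj))
      have hvR : v ∉ R := fun h => (Finset.mem_sdiff.1 (hRW h)).2 hvS
      refine ⟨insert v R, ?_, Function.update A v S, ?_, ?_, ?_⟩
      · intro x hx
        rcases Finset.mem_insert.1 hx with rfl | hx
        · exact hSW hvS
        · exact Finset.sdiff_subset (hRW hx)
      · intro x hx
        by_cases hxv : x = v
        · subst hxv; simp [hSW, hSg]
        · have hxR : x ∈ R := (Finset.mem_insert.1 hx).resolve_left hxv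
          rw [Function.update_of_ne hxv]
          exact ⟨(hA x hxR).1.trans Finset.sdiff_subset, (hA x hxR).2⟩
      · intro x hx y hy hxy
        have key : ∀ z ∈ R, Disjoint S (A z) := fun z hz =>
          Finset.disjoint_of_subset_right (hA z hz).1 Finset.disjoint_sdiff
        by_cases hxv : x = v
        · have hyv : y ≠ v := fun h => hxy (hxv.trans h.symm)
          have hyR : y ∈ R := (Finset.mem_insert.1 hy).resolve_left hyv
          rw [Function.update_of_ne hyv, hxv, Function.update_self]
          exact key y hyR
        · have hxR : x ∈ R := (Finset.mem_insert.1 hx).resolve_left hxv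
          rw [Function.update_of_ne hxv]
          by_cases hyv : y = v
          · rw [hyv, Function.update_self]
            exact (key x hxR).symm
          · have hyR : y ∈ R := (Finset.mem_insert.1 hy).resolve_left hyv
            rw [Function.update_of_ne hyv]
            exact hdis x hxR y hyR hxy
      · intro hgood
        have c1 : W \ insert v R ⊆ S.erase v ∪ (W \ S) \ R := by
          intro x hx
          simp only [Finset.mem_sdiff, Finset.mem_insert, Finset.mem_union, Finset.mem_erase] at *
          tauto
        have c2 : Disjoint (S.erase v) ((W \ S) \ R) := by
          rw [Finset.disjoint_left]
          intro x hx
          simp only [Finset.mem_sdiff, Finset.mem_erase] at *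
          exact fun h => h.1.2 hx.2
        rcases good_split hsymm c1 c2
          (fun i hi j hj => hsep i hi j (Finset.sdiff_subset hj)) hgood with h | h
        · exact hSv h
        · exact hng h
    · exact ⟨∅, by simp, fun _ => ∅, by simp, by simp, by simpa using hg⟩

theorem coarea {w : V → V → ℝ} (hsymm : ∀ i j, w i j = w j i) {μ : V → ℝ} {c : ℝ}
    {A : Finset V} (hA : ∀ S ⊆ A, S.Nonempty → c * ∑ i ∈ S, μ i ≤ ∑ i ∈ S, ∑ j ∈ Sᶜ, w i j) :
    ∀ (m : ℕ) (g : V → ℝ), (∀ i, 0 ≤ g i) → (∀ i, i ∉ A → g i = 0) →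
      (Finset.univ.filter fun i => g i ≠ 0).card ≤ m →
      c * ∑ i, μ i * g i ≤ (∑ i, ∑ j, w i j * |g i - g j|) / 2 := by
  intro m
  induction m with
  | zero =>
    intro g _ _ hc
    have h0 : ∀ i, g i = 0 := by
      intro i
      by_contra hi
      have : i ∈ (Finset.univ.filter fun i => g i ≠ 0) := by simp [hi]
      rw [Finset.card_eq_zero.1 (Nat.le_zero.1 hc)] at this
      simp at this
    simp [h0]
  | succ m ih =>
    intro g hg0 hgA hc
    set S := Finset.univ.filter fun i => g i ≠ 0 with hS
    by_cases hSe : S.Nonempty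
    · obtain ⟨s, hsS, hsmin⟩ := Finset.exists_min_image S g hSe
      have hSA : S ⊆ A := by
        intro i hi
        by_contra h
        exact (Finset.mem_filter.1 hi).2 (hgA i h)
      have hnS : ∀ i, i ∉ S → g i = 0 := by
        intro i hi
        by_contra h
        exact hi (by simp [hS, h])
      set g' : V → ℝ := fun i => if i ∈ S then g i - g s else 0 with hg'
      have h1 := ih g' (fun i => by
          simp only [hg']; split_ifs with h
          · linarith [hsmin i h]
          · exact le_rfl) (fun i hi => by
          have : i ∉ S := fun h => hi (hSA h)
          simp [hg', this]) (by
          have : (Finset.univ.filter fun i => g' i ≠ 0) ⊆ S.erase s := by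
            intro i hi
            have hi := (Finset.mem_filter.1 hi).2
            simp only [hg'] at hi
            split_ifs at hi with h
            · refine Finset.mem_erase.2 ⟨?_, h⟩
              rintro rfl
              simp at hi
            · simp at hi
          have h2 := Finset.card_le_card this
          have h3 := Finset.card_erase_lt_of_mem hsS
          omega)
      have h2 := hA S hSA hSe
      have hsum : ∑ i, μ i * g i = ∑ i, μ i * g' i + g s * ∑ i ∈ S, μ i := by
        have : ∑ i ∈ S, μ i = ∑ i, if i ∈ S then μ i else 0 := by
          rw [Finset.sum_ite_mem, Finset.univ_inter]
        rw [this, Finset.mul_sum, ← Finset.sum_add_distrib]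
        refine Finset.sum_congr rfl fun i _ => ?_
        simp only [hg']
        split_ifs with h
        · ring
        · rw [hnS i h]; ring
      have hcut : ∑ i ∈ S, ∑ j ∈ Sᶜ, w i j =
          ∑ i, ∑ j, (if i ∈ S ∧ j ∉ S then w i j else 0) := by
        rw [← Finset.sum_filter_add_sum_filter_not Finset.univ (fun i => i ∈ S)
          (fun i => ∑ j, (if i ∈ S ∧ j ∉ S then w i j else 0))]
        have z : ∑ i with i ∉ S, ∑ j, (if i ∈ S ∧ j ∉ S then w i j else 0) = 0 := by
          refine Finset.sum_eq_zero fun i hi => Finset.sum_eq_zero fun j _ => ?_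
          simp [(Finset.mem_filter.1 hi).2]
        rw [z, add_zero, Finset.filter_mem_eq_inter, Finset.univ_inter]
        refine Finset.sum_congr rfl fun i hi => ?_
        simp only [hi, true_and]
        rw [← Finset.sum_filter]
        congr 1
        ext j; simp
      have hcut2 : ∑ i ∈ S, ∑ j ∈ Sᶜ, w i j =
          ∑ i, ∑ j, (if j ∈ S ∧ i ∉ S then w i j else 0) := by
        rw [hcut, Finset.sum_comm]
        refine Finset.sum_congr rfl fun i _ => Finset.sum_congr rfl fun j _ => ?_
        rw [hsymm]
      have htv : ∑ i, ∑ j, w i j * |g i - g j| = ∑ i, ∑ j, w i j * |g' i - g' j|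
          + g s * (∑ i ∈ S, ∑ j ∈ Sᶜ, w i j) + g s * (∑ i ∈ S, ∑ j ∈ Sᶜ, w i j) := by
        nth_rw 1 [hcut]
        rw [hcut2]
        simp only [Finset.mul_sum, ← Finset.sum_add_distrib]
        refine Finset.sum_congr rfl fun i _ => Finset.sum_congr rfl fun j _ => ?_
        simp only [hg']
        by_cases hi : i ∈ S
        · by_cases hj : j ∈ S
          · simp [hi, hj]
          · have a := hsmin i hi
            simp [hi, hj, hnS j hj, abs_of_nonneg (hg0 i), abs_of_nonneg (sub_nonneg.2 a)]
            ring
        · by_cases hj : j ∈ S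
          · have a := hsmin j hj
            simp [hi, hj, hnS i hi, abs_of_nonneg (hg0 j)]
            rw [abs_of_nonpos (by linarith)]
            ring
          · simp [hi, hj, hnS i hi, hnS j hj]
      rw [hsum, htv]
      have := mul_le_mul_of_nonneg_left h2 (hg0 s)
      nlinarith
    · apply ih g hg0 hgA
      have h0 : S.card = 0 := by rw [Finset.not_nonempty_iff_eq_empty.1 hSe]; simp
      change S.card ≤ m
      omega

theorem cheeger_sweep {w : V → V → ℝ} (hsymm : ∀ i j, w i j = w j i) (hw : ∀ i j, 0 ≤ w i j)
    {κ μ : V → ℝ} (hμ : ∀ i, 0 < μ i) (hκ : ∀ i, 0 ≤ κ i) {t : ℝ} {A : Finset V}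
    (hg : Good w κ μ t A) :
    ∃ S ⊆ A, S.Nonempty ∧ conductance w μ S ≤ Real.sqrt (2 * tauMax w μ * t) := by
  have hAne := hg.nonempty
  obtain ⟨f, hf, hs, hq⟩ := hg
  obtain ⟨S, hSF, hmin⟩ := Finset.exists_min_image (A.powerset.filter (·.Nonempty))
    (conductance w μ) ⟨A, by simp [hAne]⟩
  simp only [Finset.mem_filter, Finset.mem_powerset] at hSF hmin
  refine ⟨S, hSF.1, hSF.2, ?_⟩
  set N := ∑ i, μ i * f i ^ 2 with hN
  have hNpos : 0 < N := by
    obtain ⟨i, hi⟩ := Function.ne_iff.1 hf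
    refine Finset.sum_pos' (fun j _ => mul_nonneg (hμ j).le (sq_nonneg _)) ⟨i, by simp, ?_⟩
    have : f i ≠ 0 := hi
    have := hμ i
    positivity
  have hco := coarea hsymm (μ := μ) (c := conductance w μ S) (A := A) (fun B hB hBn => by
    have h1 := hmin B ⟨hB, hBn⟩
    have hp : 0 < ∑ i ∈ B, μ i := Finset.sum_pos (fun i _ => hμ i) hBn
    have h2 : conductance w μ B * ∑ i ∈ B, μ i = ∑ i ∈ B, ∑ j ∈ Bᶜ, w i j := by
      rw [conductance, div_mul_cancel₀ _ hp.ne']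
    rw [← h2]
    exact mul_le_mul_of_nonneg_right h1 hp.le) _ (fun i => f i ^ 2) (fun i => sq_nonneg _)
    (fun i hi => by simp [hs i hi]) le_rfl
  set TV := ∑ i, ∑ j, w i j * |f i ^ 2 - f j ^ 2| with hTV
  set E := ∑ i, ∑ j, w i j * (f i - f j) ^ 2 with hE
  set P := ∑ i, ∑ j, w i j * (f i + f j) ^ 2 with hP
  have hTV0 : 0 ≤ TV := Finset.sum_nonneg fun i _ => Finset.sum_nonneg fun j _ =>
    mul_nonneg (hw i j) (abs_nonneg _)
  have hE0 : 0 ≤ E := Finset.sum_nonneg fun i _ => Finset.sum_nonneg fun j _ =>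
    mul_nonneg (hw i j) (sq_nonneg _)
  have hP0 : 0 ≤ P := Finset.sum_nonneg fun i _ => Finset.sum_nonneg fun j _ =>
    mul_nonneg (hw i j) (sq_nonneg _)
  have hCS : TV ^ 2 ≤ E * P := by
    simp only [hTV, hE, hP, ← Finset.sum_product']
    refine Finset.sum_sq_le_sum_mul_sum_of_sq_le_mul _ ?_ ?_ ?_
    · exact fun p _ => mul_nonneg (hw _ _) (sq_nonneg _)
    · exact fun p _ => mul_nonneg (hw _ _) (sq_nonneg _)
    · intro p _
      rw [mul_pow, sq_abs]
      apply le_of_eq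
      ring
  have htau : ∀ i, wdeg w i ≤ tauMax w μ * μ i := by
    intro i
    have : wdeg w i / μ i ≤ tauMax w μ :=
      le_ciSup (f := fun i => wdeg w i / μ i) (Set.finite_range _).bddAbove i
    rwa [div_le_iff₀ (hμ i)] at this
  have hPle : P ≤ 4 * (tauMax w μ * N) := by
    have h1 : P ≤ ∑ i, ∑ j, (2 * (w i j * f i ^ 2) + 2 * (w i j * f j ^ 2)) := by
      refine Finset.sum_le_sum fun i _ => Finset.sum_le_sum fun j _ => ?_
      nlinarith [mul_nonneg (hw i j) (sq_nonneg (f i - f j))]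
    have h2 : ∑ i, ∑ j, w i j * f i ^ 2 = ∑ i, wdeg w i * f i ^ 2 := by
      simp only [wdeg, Finset.sum_mul]
    have h3 : ∑ i, ∑ j, w i j * f j ^ 2 = ∑ i, wdeg w i * f i ^ 2 := by
      rw [Finset.sum_comm, ← h2]
      refine Finset.sum_congr rfl fun i _ => Finset.sum_congr rfl fun j _ => ?_
      rw [hsymm]
    have h4 : ∑ i, wdeg w i * f i ^ 2 ≤ tauMax w μ * N := by
      rw [hN, Finset.mul_sum]
      refine Finset.sum_le_sum fun i _ => ?_
      rw [← mul_assoc]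
      exact mul_le_mul_of_nonneg_right (htau i) (sq_nonneg _)
    simp only [Finset.sum_add_distrib, ← Finset.mul_sum, h2, h3] at h1
    linarith
  have hEle : E ≤ 2 * (t * N) := by
    have h5 : 0 ≤ ∑ i, κ i * f i ^ 2 :=
      Finset.sum_nonneg fun i _ => mul_nonneg (hκ i) (sq_nonneg _)
    have : E / 2 + ∑ i, κ i * f i ^ 2 ≤ t * N := hq
    linarith
  have hc0 : 0 ≤ conductance w μ S := div_nonneg
    (Finset.sum_nonneg fun i _ => Finset.sum_nonneg fun j _ => hw i j)
    (Finset.sum_nonneg fun i _ => (hμ i).le)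
  apply Real.le_sqrt_of_sq_le
  have h6 : E * P ≤ (2 * (t * N)) * (4 * (tauMax w μ * N)) :=
    mul_le_mul hEle hPle hP0 (hE0.trans hEle)
  have h7 : (conductance w μ S * N) ^ 2 ≤ (TV / 2) ^ 2 :=
    pow_le_pow_left₀ (mul_nonneg hc0 hNpos.le) hco 2
  have h8 : conductance w μ S ^ 2 * N ^ 2 ≤ (2 * tauMax w μ * t) * N ^ 2 := by nlinarith
  exact le_of_mul_le_mul_right h8 (by positivity)

theorem QF_eq {w : V → V → ℝ} (hsymm : ∀ i j, w i j = w j i) (κ f : V → ℝ) :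
    QF w κ f = f ⬝ᵥ ((Matrix.diagonal (wdeg w) + Matrix.diagonal κ - Matrix.of w) *ᵥ f) := by
  have h1 : f ⬝ᵥ ((Matrix.diagonal (wdeg w) + Matrix.diagonal κ - Matrix.of w) *ᵥ f) =
      ∑ i, (wdeg w i * f i ^ 2 + κ i * f i ^ 2 - ∑ j, w i j * (f i * f j)) := by
    simp only [Matrix.sub_mulVec, Matrix.add_mulVec, dotProduct, Pi.sub_apply, Pi.add_apply,
      Matrix.mulVec_diagonal]
    refine Finset.sum_congr rfl fun i _ => ?_
    have : (Matrix.of w *ᵥ f) i = ∑ j, w i j * f j := rfl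
    rw [this, mul_sub, Finset.mul_sum]
    congr 1
    · ring
    · exact Finset.sum_congr rfl fun j _ => by ring
  have h2 : ∑ i, ∑ j, w i j * f i ^ 2 = ∑ i, wdeg w i * f i ^ 2 := by
    simp only [wdeg, Finset.sum_mul]
  have h3 : ∑ i, ∑ j, w i j * f j ^ 2 = ∑ i, wdeg w i * f i ^ 2 := by
    rw [Finset.sum_comm, ← h2]
    refine Finset.sum_congr rfl fun i _ => Finset.sum_congr rfl fun j _ => ?_
    rw [hsymm]
  have h4 : ∑ i, ∑ j, w i j * (f i - f j) ^ 2 = ∑ i, ∑ j, w i j * f i ^ 2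
      + ∑ i, ∑ j, w i j * f j ^ 2 - 2 * ∑ i, ∑ j, w i j * (f i * f j) := by
    simp only [Finset.mul_sum, ← Finset.sum_add_distrib, ← Finset.sum_sub_distrib]
    exact Finset.sum_congr rfl fun i _ => Finset.sum_congr rfl fun j _ => by ring
  rw [h1, QF, h4, h2, h3, Finset.sum_sub_distrib, Finset.sum_add_distrib]
  ring

theorem hermitian_diag {B : Matrix V V ℝ} (hB : B.IsHermitian) :
    ∃ (U : Matrix V V ℝ) (e : V → ℝ), Uᵀ * U = 1 ∧ B * U = U * Matrix.diagonal e ∧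
      B.charpoly = ∏ i, (X - C (e i)) := by
  refine ⟨hB.eigenvectorUnitary, hB.eigenvalues, ?_, ?_, ?_⟩
  · have := Unitary.coe_star_mul_self hB.eigenvectorUnitary
    rwa [Matrix.star_eq_conjTranspose, Matrix.conjTranspose_eq_transpose_of_trivial] at this
  · have h := hB.spectral_theorem
    rw [Unitary.conjStarAlgAut_apply] at h
    have h1 := Unitary.coe_star_mul_self hB.eigenvectorUnitary
    have h2 := congrArg (fun Y => Y * (hB.eigenvectorUnitary : Matrix V V ℝ)) h
    simp only [mul_assoc, h1, mul_one] at h2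
    exact h2
  · simpa using hB.charpoly_eq

theorem spectral_test {n : ℕ} {w : Fin n → Fin n → ℝ} (hsymm : ∀ i j, w i j = w j i)
    {μ κ : Fin n → ℝ} (hμ : ∀ i, 0 < μ i) {lam : Fin n → ℝ} (hmono : Monotone lam)
    (hchar : (normLap w μ κ).charpoly = ∏ i, (X - C (lam i)))
    (k : Fin n) (Z : Finset (Fin n)) (hZ : Z.card ≤ k) :
    Good w κ μ (lam k) Zᶜ := by
  classical
  set r : Fin n → ℝ := fun i => (Real.sqrt (μ i))⁻¹ with hr
  have hr0 : ∀ i, r i ≠ 0 := fun i => inv_ne_zero (Real.sqrt_pos.2 (hμ i)).ne'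
  have hrr : ∀ i, μ i * r i ^ 2 = 1 := by
    intro i
    simp only [hr, inv_pow, Real.sq_sqrt (hμ i).le]
    exact mul_inv_cancel₀ (hμ i).ne'
  set Lm : Matrix (Fin n) (Fin n) ℝ :=
    Matrix.diagonal (wdeg w) + Matrix.diagonal κ - Matrix.of w with hLm
  have hinv : (Matrix.diagonal μ)⁻¹ = Matrix.diagonal r * Matrix.diagonal r := by
    apply Matrix.inv_eq_right_inv
    rw [Matrix.diagonal_mul_diagonal, Matrix.diagonal_mul_diagonal, ← Matrix.diagonal_one]
    congr 1
    funext i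
    rw [← hrr i]; ring
  set B := (Matrix.diagonal r * Lm) * Matrix.diagonal r with hBdef
  have hcharB : B.charpoly = ∏ i, (X - C (lam i)) := by
    rw [← hchar, hBdef, Matrix.charpoly_mul_comm, ← mul_assoc, ← hinv]
    rfl
  have hLt : Lmᵀ = Lm := by
    have : (Matrix.of w)ᵀ = Matrix.of w := by
      ext i j; simp [hsymm i j]
    rw [hLm, Matrix.transpose_sub, Matrix.transpose_add, this, Matrix.diagonal_transpose,
      Matrix.diagonal_transpose]
  have hB : B.IsHermitian := by
    rw [Matrix.IsHermitian, Matrix.conjTranspose_eq_transpose_of_trivial, hBdef]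
    rw [Matrix.transpose_mul, Matrix.transpose_mul, Matrix.diagonal_transpose, hLt, mul_assoc]
  obtain ⟨U, e, hU, hBU, hce⟩ := hermitian_diag hB
  -- multisets of eigenvalues agree
  have hms : Finset.univ.val.map e = Finset.univ.val.map lam := by
    have h : ∀ a : Fin n → ℝ, (∏ i, (X - C (a i))).roots = Finset.univ.val.map a := by
      intro a
      have : (∏ i, (X - C (a i))) = ((Finset.univ.val.map a).map fun x => X - C x).prod := by
        rw [Multiset.map_map]; rfl
      rw [this, Polynomial.roots_multiset_prod_X_sub_C]
    rw [← h e, ← h lam, ← hce, hcharB]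
  set I := Finset.univ.filter fun i => e i ≤ lam k with hI
  have hIcard : (k : ℕ) + 1 ≤ I.card := by
    have h1 : I.card = (Finset.univ.filter fun i => lam i ≤ lam k).card := by
      have := congrArg (Multiset.countP (fun x => x ≤ lam k)) hms
      rw [Multiset.countP_map, Multiset.countP_map] at this
      exact this
    rw [h1]
    have h2 : Finset.Iic k ⊆ Finset.univ.filter fun i => lam i ≤ lam k := by
      intro i hi
      simp only [Finset.mem_filter, Finset.mem_univ, true_and]
      exact hmono (Finset.mem_Iic.1 hi)
    have h3 := Finset.card_le_card h2
    rwa [Fin.card_Iic] at h3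
  -- extension by zero
  let ext0 : (I → ℝ) →ₗ[ℝ] (Fin n → ℝ) :=
    { toFun := fun c i => if h : i ∈ I then c ⟨i, h⟩ else 0
      map_add' := by
        intro a b; funext i; by_cases h : i ∈ I <;> simp [h]
      map_smul' := by
        intro a b; funext i; by_cases h : i ∈ I <;> simp [h] }
  let Φ : (I → ℝ) →ₗ[ℝ] (Z → ℝ) :=
    (LinearMap.funLeft ℝ ℝ (fun z : Z => (z : Fin n))) ∘ₗ (Matrix.mulVecLin U) ∘ₗ ext0
  have hker : LinearMap.ker Φ ≠ ⊥ := by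
    apply LinearMap.ker_ne_bot_of_finrank_lt
    simp
    omega
  obtain ⟨c, hcker, hc0⟩ := Submodule.exists_mem_ne_zero_of_ne_bot hker
  set d := ext0 c with hd
  have hdI : ∀ i, i ∉ I → d i = 0 := by
    intro i hi
    simp [hd, ext0, hi]
  have hd0 : d ≠ 0 := by
    intro h
    apply hc0
    funext i
    have := congrFun h i
    simpa [hd, ext0] using this
  set g := U *ᵥ d with hg
  have hgZ : ∀ z ∈ Z, g z = 0 := by
    intro z hz
    exact congrFun (LinearMap.mem_ker.1 hcker) ⟨z, hz⟩
  have hgg : g ⬝ᵥ g = d ⬝ᵥ d := by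
    rw [hg, Matrix.dotProduct_mulVec, Matrix.vecMul_mulVec, hU, Matrix.vecMul_one]
  have hgB : g ⬝ᵥ (B *ᵥ g) = ∑ i, e i * d i ^ 2 := by
    rw [hg, Matrix.mulVec_mulVec, hBU, ← Matrix.mulVec_mulVec, Matrix.dotProduct_mulVec,
      Matrix.vecMul_mulVec, hU, Matrix.vecMul_one]
    simp only [dotProduct, Matrix.mulVec_diagonal]
    exact Finset.sum_congr rfl fun i _ => by ring
  have hg0 : g ≠ 0 := by
    intro h
    rw [h] at hgg
    simp only [dotProduct_zero] at hgg
    exact hd0 (dotProduct_self_eq_zero.1 hgg.symm)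
  have hf : (fun i => r i * g i) = Matrix.diagonal r *ᵥ g := by
    funext i; rw [Matrix.mulVec_diagonal]
  refine ⟨fun i => r i * g i, ?_, ?_, ?_⟩
  · intro h
    apply hg0
    funext i
    exact (mul_eq_zero.1 (congrFun h i)).resolve_left (hr0 i)
  · intro i hi
    simp only [hgZ i (by simpa using hi), mul_zero]
  · have hN : ∑ i, μ i * (r i * g i) ^ 2 = d ⬝ᵥ d := by
      rw [← hgg, dotProduct]
      refine Finset.sum_congr rfl fun i _ => ?_
      linear_combination (g i ^ 2) * hrr i
    have hQ : QF w κ (fun i => r i * g i) = ∑ i, e i * d i ^ 2 := by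
      rw [QF_eq hsymm, ← hgB, ← hLm, hf, hBdef, ← Matrix.mulVec_mulVec, ← Matrix.mulVec_mulVec]
      rw [Matrix.dotProduct_mulVec g, ← Matrix.mulVec_transpose, Matrix.diagonal_transpose]
    rw [hN, hQ, dotProduct, Finset.mul_sum]
    refine Finset.sum_le_sum fun i _ => ?_
    by_cases hi : i ∈ I
    · have := (Finset.mem_filter.1 hi).2
      nlinarith [sq_nonneg (d i)]
    · simp [hdI i hi]

theorem feedback {n : ℕ} (G : SimpleGraph (Fin n)) [DecidableRel G.Adj] (hconn : G.Connected) :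
    ∃ H : SimpleGraph (Fin n), H.IsAcyclic ∧ ∃ Z : Finset (Fin n),
      Z.card ≤ G.edgeFinset.card + 1 - n ∧
      ∀ i, i ∉ Z → ∀ j, j ∉ Z → G.Adj i j → H.Adj i j := by
  classical
  obtain ⟨T, hTG, hT⟩ := hconn.exists_isTree_le
  refine ⟨T, hT.isAcyclic, (G.edgeFinset \ T.edgeFinset).image (fun e => (Quot.out e).1), ?_, ?_⟩
  · refine Finset.card_image_le.trans ?_
    have h1 := hT.card_edgeFinset
    rw [Fintype.card_fin] at h1
    rw [Finset.card_sdiff_of_subset (SimpleGraph.edgeFinset_mono hTG)]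
    omega
  · intro i hi j hj hij
    by_contra hT'
    have hmem : s(i, j) ∈ G.edgeFinset \ T.edgeFinset := by
      simp [hij, hT']
    have h2 := Finset.mem_image_of_mem (fun e : Sym2 (Fin n) => (Quot.out e).1) hmem
    have h3 : (Quot.out s(i, j)).1 ∈ s(i, j) := Sym2.out_fst_mem _
    rcases Sym2.mem_iff.1 h3 with h | h
    · exact hi (h ▸ h2)
    · exact hj (h ▸ h2)

end MWC

/-- **Theorem (main).** For a finite connected weighted graph with nonnegative
potential, with cyclomatic number `ℓ = |E| - |V| + 1`, for every `ℓ + 1 ≤ k ≤ n` one has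
`ρ_{k-ℓ}(G) ≤ √(2 τ_G λ_k(G))`, where `λ_1 ≤ … ≤ λ_n` are the eigenvalues of the
normalized Laplacian listed with multiplicity in ascending order. -/
theorem multiway_cheeger_cyclomatic (n : ℕ) (G : SimpleGraph (Fin n)) [DecidableRel G.Adj]
    (hconn : G.Connected)
    (w : Fin n → Fin n → ℝ) (hsymm : ∀ i j, w i j = w j i)
    (hpos : ∀ i j, G.Adj i j → 0 < w i j) (hzero : ∀ i j, ¬ G.Adj i j → w i j = 0)
    (μ : Fin n → ℝ) (hμ : ∀ i, 0 < μ i)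
    (κ : Fin n → ℝ) (hκ : ∀ i, 0 ≤ κ i)
    (lam : Fin n → ℝ) (hmono : Monotone lam)
    (hchar : (normLap w μ κ).charpoly = ∏ i, (X - C (lam i)))
    (l : ℕ) (hl : l = G.edgeFinset.card + 1 - n)
    (k : ℕ) (hk1 : l + 1 ≤ k) (hk2 : k ≤ n) :
    cheeger (k - l) w μ ≤ Real.sqrt (2 * tauMax w μ * lam ⟨k - 1, by omega⟩) := by
  have hw : ∀ i j, 0 ≤ w i j := by
    intro i j
    by_cases h : G.Adj i j
    · exact (hpos i j h).le
    · exact (hzero i j h).ge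
  set t := lam ⟨k - 1, by omega⟩ with ht
  obtain ⟨H, hH, Z, hZ, hZH⟩ := MWC.feedback G hconn
  obtain ⟨R, hRW, A, hA, hdis, hng⟩ := MWC.forest_decomp hsymm (κ := κ) (μ := μ) (t := t) hH _ Zᶜ
    le_rfl (fun i hi j hj hne _ => hZH i (by simpa using hi) j (by simpa using hj) (by
      by_contra h
      exact hne (hzero i j h)))
  have hcard : k - l ≤ R.card := by
    by_contra hlt
    apply hng
    have h1 := MWC.spectral_test hsymm hμ hmono hchar ⟨k - 1, by omega⟩ (Z ∪ R) (by
      have := Finset.card_union_le Z R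
      simp only
      omega)
    have h2 : (Z ∪ R)ᶜ = Zᶜ \ R := by
      ext x; simp
    rwa [h2] at h1
  have hsw : ∀ v : R, ∃ S ⊆ A v, S.Nonempty ∧
      conductance w μ S ≤ Real.sqrt (2 * tauMax w μ * t) := fun v =>
    MWC.cheeger_sweep hsymm hw hμ hκ (hA v v.2).2
  choose S hSA hSne hSc using hsw
  obtain ⟨emb⟩ : Nonempty (Fin (k - l) ↪ R) :=
    Function.Embedding.nonempty_of_card_le (by simpa using hcard)
  haveI : Nonempty (Fin (k - l)) := ⟨⟨0, by omega⟩⟩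
  refine csInf_le_of_le ?_ ⟨fun i => S (emb i), fun i => hSne _, ?_, rfl⟩
    (ciSup_le fun i => hSc (emb i))
  · refine ⟨0, ?_⟩
    rintro x ⟨B, -, -, rfl⟩
    refine Real.iSup_nonneg fun i => div_nonneg
      (Finset.sum_nonneg fun i _ => Finset.sum_nonneg fun j _ => hw i j)
      (Finset.sum_nonneg fun i _ => (hμ i).le)
  · intro i j hij
    have hne : (emb i : Fin n) ≠ emb j := fun h => hij (emb.injective (Subtype.ext h))
    exact Finset.disjoint_of_subset_left (hSA _)
      (Finset.disjoint_of_subset_right (hSA _) (hdis _ (emb i).2 _ (emb j).2 hne))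
end

section
/- Let G = (V,E,w,μ,κ) be a finite weighted tree (a connected graph with |E| = |V| − 1) with nonnegative potential κ ≥ 0. Then for every 1 ≤ k ≤ n, the k-way Cheeger constant satisfies ρ_k(G) ≤ √(2 τ_G λ_k(G)). -/
open BigOperators Matrix Polynomial

lemma exists_parent (n : ℕ) (G : SimpleGraph (Fin n)) [DecidableRel G.Adj]
    (hconn : G.Connected) (htree : G.edgeFinset.card = n - 1) :
    ∃ (r : Fin n) (p : Fin n → Fin n) (dep : Fin n → ℕ),
      (∀ v, v ≠ r → dep (p v) < dep v ∧ G.Adj v (p v)) ∧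
      ∀ i j, G.Adj i j → (i ≠ r ∧ p i = j) ∨ (j ≠ r ∧ p j = i) := by
  classical
  obtain ⟨r⟩ := hconn.nonempty
  have h1 : ∀ v, ∃ u, v ≠ r → G.dist u r < G.dist v r ∧ G.Adj v u := by
    intro v
    by_cases hv : v = r
    · exact ⟨v, fun h => absurd hv h⟩
    · obtain ⟨q, hq⟩ := hconn.exists_walk_length_eq_dist v r
      cases q with
      | nil => exact absurd rfl hv
      | @cons _ u _ h q =>
        refine ⟨u, fun _ => ⟨?_, h⟩⟩
        have := SimpleGraph.dist_le q
        simp at hq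
        omega
  choose p hp using h1
  refine ⟨r, p, fun v => G.dist v r, hp, ?_⟩
  have hsub : (Finset.univ.erase r).image (fun v => s(v, p v)) ⊆ G.edgeFinset := by
    intro e he
    simp only [Finset.mem_image, Finset.mem_erase, Finset.mem_univ, and_true] at he
    obtain ⟨v, hv, rfl⟩ := he
    simpa using (hp v hv).2
  have hinj : Set.InjOn (fun v => s(v, p v)) (Finset.univ.erase r : Finset (Fin n)) := by
    intro v hv v' hv' h
    simp only [Finset.coe_erase, Finset.coe_univ, Set.mem_sdiff, Set.mem_univ, true_and,
      Set.mem_singleton_iff] at hv hv'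
    simp only [Sym2.eq_iff] at h
    rcases h with h | ⟨h, h'⟩
    · exact h.1
    · have a := (hp v hv).1
      have b := (hp v' hv').1
      rw [h'] at a
      rw [← h] at b
      omega
  have heq := Finset.eq_of_subset_of_card_le hsub (by
    rw [Finset.card_image_of_injOn hinj, htree]; simp)
  intro i j hij
  have : s(i, j) ∈ G.edgeFinset := by simpa using hij
  rw [← heq] at this
  simp only [Finset.mem_image, Finset.mem_erase, Finset.mem_univ, and_true] at this
  obtain ⟨v, hv, h⟩ := this
  rw [Sym2.eq_iff] at h
  rcases h with ⟨h, h'⟩ | ⟨h, h'⟩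
  · left; subst h; exact ⟨hv, h'⟩
  · right; subst h; exact ⟨hv, h'⟩

lemma exists_pivot {V : Type*} [Fintype V] [DecidableEq V] (r : V) (p : V → V) (dep : V → ℕ)
    (hp : ∀ v, v ≠ r → dep (p v) < dep v) (a b : V → ℝ) (hb : b r = 0) :
    ∃ d : V → ℝ, ∀ v, d v = a v - ∑ c, if p c = v then (if 0 < d c then b c ^ 2 / d c else 0) else 0 := by
  have hwf : WellFounded (fun c v : V => dep v < dep c) := by
    have : IsTrans V (fun c v : V => dep v < dep c) := ⟨fun _ _ _ h h' => lt_trans h' h⟩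
    have : Std.Irrefl (fun c v : V => dep v < dep c) := ⟨fun _ h => lt_irrefl _ h⟩
    exact Finite.wellFounded_of_trans_of_irrefl _
  refine ⟨hwf.fix (fun v rec => a v - ∑ c, if h : dep v < dep c ∧ p c = v then
    (if 0 < rec c h.1 then b c ^ 2 / rec c h.1 else 0) else 0), fun v => ?_⟩
  rw [hwf.fix_eq]
  congr 1
  apply Finset.sum_congr rfl
  intro c _
  by_cases hc : c = r
  · subst hc; simp [hb]
  · by_cases h : p c = v
    · have := hp c hc
      rw [h] at this
      simp [h, this]
    · simp [h]

lemma exists_test {V : Type*} [DecidableEq V] (r : V) (p : V → V) (dep : V → ℕ)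
    (hp : ∀ v, v ≠ r → dep (p v) < dep v) (b d : V → ℝ) (hb : b r = 0) (v : V) :
    ∃ g : V → ℝ, ∀ u, g u = if u = v then 1 else if d u ≤ 0 then 0 else b u * g (p u) / d u := by
  have hwf : WellFounded (fun c v : V => dep c < dep v) := InvImage.wf dep Nat.lt_wfRel.wf
  refine ⟨hwf.fix (fun u rec => if u = v then 1 else if d u ≤ 0 then 0 else
    if h : u = r then 0 else b u * rec (p u) (hp u h) / d u), fun u => ?_⟩
  rw [hwf.fix_eq]
  by_cases hu : u = r
  · subst hu; simp [hb]
  · simp [hu]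

lemma quad_identity {V : Type*} [Fintype V] [DecidableEq V] (p : V → V) (a b d : V → ℝ)
    (hd : ∀ v, d v = a v - ∑ c, if p c = v then (if 0 < d c then b c ^ 2 / d c else 0) else 0)
    (f : V → ℝ) :
    ∑ v, a v * f v ^ 2 - 2 * ∑ c, b c * f c * f (p c) =
      ∑ c, if 0 < d c then d c * (f c - b c * f (p c) / d c) ^ 2
        else d c * f c ^ 2 - 2 * (b c * f c * f (p c)) := by
  have h1 : ∑ v, a v * f v ^ 2 = ∑ v, d v * f v ^ 2 +
      ∑ c, (if 0 < d c then b c ^ 2 / d c else 0) * f (p c) ^ 2 := by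
    have : ∑ c, (if 0 < d c then b c ^ 2 / d c else 0) * f (p c) ^ 2 =
        ∑ v, (∑ c, if p c = v then (if 0 < d c then b c ^ 2 / d c else 0) else 0) * f v ^ 2 := by
      simp_rw [Finset.sum_mul]
      rw [Finset.sum_comm]
      apply Finset.sum_congr rfl
      intro c _
      simp
    rw [this, ← Finset.sum_add_distrib]
    apply Finset.sum_congr rfl
    intro v _
    rw [← add_mul]
    congr 1
    linarith [hd v]
  rw [h1, Finset.mul_sum, ← Finset.sum_add_distrib, ← Finset.sum_sub_distrib]
  apply Finset.sum_congr rfl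
  intro c _
  split_ifs with h
  · field_simp; ring
  · ring

lemma sum_edges {V : Type*} [Fintype V] [DecidableEq V] (r : V) (p : V → V) (dep : V → ℕ)
    (hp : ∀ v, v ≠ r → dep (p v) < dep v) (w : V → V → ℝ) (hsymm : ∀ i j, w i j = w j i)
    (hw : ∀ i j, w i j ≠ 0 → (i ≠ r ∧ p i = j) ∨ (j ≠ r ∧ p j = i)) (f : V → ℝ) :
    ∑ i, ∑ j, w i j * f i * f j =
      2 * ∑ c, (if c = r then 0 else w c (p c)) * f c * f (p c) := by
  have h1 : ∀ i j, w i j * f i * f j = (if p i = j then (if i = r then 0 else w i j * f i * f j) else 0)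
      + (if p j = i then (if j = r then 0 else w i j * f i * f j) else 0) := by
    intro i j
    by_cases h0 : w i j = 0
    · simp [h0]
    rcases hw i j h0 with ⟨h, h'⟩ | ⟨h, h'⟩
    · have := hp i h
      by_cases hj : p j = i
      · by_cases hjr : j = r
        · simp [h, h', hj, hjr]
        · have h2 := hp j hjr
          rw [hj] at h2; rw [h'] at this; omega
      · simp [h, h', hj]
    · have := hp j h
      by_cases hj : p i = j
      · by_cases hjr : i = r
        · simp [h, h', hj, hjr]
        · have h2 := hp i hjr
          rw [hj] at h2; rw [h'] at this; omega
      · simp [h, h', hj]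
  rw [Finset.sum_congr rfl fun i _ => Finset.sum_congr rfl fun j _ => h1 i j]
  simp only [Finset.sum_add_distrib]
  rw [Finset.sum_comm (f := fun i j => if p j = i then (if j = r then 0 else w i j * f i * f j) else 0)]
  simp only [Finset.sum_ite_eq, Finset.mem_univ, if_true]
  rw [two_mul]
  congr 1
  · apply Finset.sum_congr rfl; intro c _; split_ifs <;> ring
  · apply Finset.sum_congr rfl; intro c _; rw [hsymm c]; split_ifs <;> ring

lemma eig_count {V : Type*} [Fintype V] [DecidableEq V] (L : Matrix V V ℝ) (hL : Lᵀ = L)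
    (μ : V → ℝ) (hμ : ∀ i, 0 < μ i) (lam : V → ℝ)
    (hchar : ((Matrix.diagonal μ)⁻¹ * L).charpoly = ∏ i, (X - C (lam i)))
    (S : Finset V) (l : ℝ)
    (hPD : ∀ f : V → ℝ, (∀ v ∈ S, f v = 0) → f ⬝ᵥ (L *ᵥ f) ≤ l * ∑ i, μ i * f i ^ 2 → f = 0) :
    (Finset.univ.filter (fun i => lam i ≤ l)).card ≤ S.card := by
  set s : V → ℝ := fun i => (Real.sqrt (μ i))⁻¹ with hs
  have hs2 : ∀ i, s i * s i = (μ i)⁻¹ := fun i => by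
    simp only [hs]; rw [← mul_inv, Real.mul_self_sqrt (hμ i).le]
  have hspos : ∀ i, 0 < s i := fun i => inv_pos.mpr (Real.sqrt_pos.mpr (hμ i))
  set N : Matrix V V ℝ := Matrix.diagonal s * L * Matrix.diagonal s with hN
  have hinv : (Matrix.diagonal μ)⁻¹ = Matrix.diagonal s * Matrix.diagonal s := by
    apply Matrix.inv_eq_right_inv
    rw [Matrix.diagonal_mul_diagonal, Matrix.diagonal_mul_diagonal, ← Matrix.diagonal_one]
    congr 1
    ext i
    rw [hs2]
    exact mul_inv_cancel₀ (hμ i).ne'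
  have hNH : N.IsHermitian := by
    rw [Matrix.IsHermitian, Matrix.conjTranspose_eq_transpose_of_trivial, hN,
      Matrix.transpose_mul, Matrix.transpose_mul, hL, Matrix.diagonal_transpose, Matrix.mul_assoc]
  have hcp : N.charpoly = ∏ i, (X - C (lam i)) := by
    rw [← hchar, hinv, hN, Matrix.charpoly_mul_comm, Matrix.mul_assoc]
  have hroots : Multiset.map lam Finset.univ.val = Multiset.map hNH.eigenvalues Finset.univ.val := by
    have h1 := hNH.roots_charpoly_eq_eigenvalues
    rw [hcp, Polynomial.roots_prod _ _ (Finset.prod_ne_zero_iff.mpr fun i _ => Polynomial.X_sub_C_ne_zero _)] at h1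
    simpa [Function.comp_def] using h1
  have hcount : (Finset.univ.filter (fun i => lam i ≤ l)).card =
      (Finset.univ.filter (fun i => hNH.eigenvalues i ≤ l)).card := by
    have := congrArg (fun m => Multiset.card (Multiset.filter (fun x => x ≤ l) m)) hroots
    simp only [Multiset.filter_map, Multiset.card_map] at this
    exact this
  rw [hcount]
  by_contra hlt
  push Not at hlt
  set e := hNH.eigenvalues with he
  set U : Matrix V V ℝ := (hNH.eigenvectorUnitary : Matrix V V ℝ) with hU
  have hUU : Uᵀ * U = 1 := by
    have := (Matrix.mem_unitaryGroup_iff').mp hNH.eigenvectorUnitary.2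
    simpa [Matrix.star_eq_conjTranspose] using this
  have hspec : N = U * Matrix.diagonal e * Uᵀ := by
    have := hNH.spectral_theorem
    rw [Unitary.conjStarAlgAut_apply] at this
    simpa [Matrix.star_eq_conjTranspose, Function.comp_def] using this
  let I := Finset.univ.filter (fun i => e i ≤ l)
  let F : (V → ℝ) →ₗ[ℝ] ((S → ℝ) × ((Iᶜ : Finset V) → ℝ)) :=
    LinearMap.prod ((LinearMap.funLeft ℝ ℝ (Subtype.val : S → V)).comp U.mulVecLin)
      (LinearMap.funLeft ℝ ℝ (Subtype.val : (Iᶜ : Finset V) → V))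
  have hker : LinearMap.ker F ≠ ⊥ := by
    apply LinearMap.ker_ne_bot_of_finrank_lt
    rw [Module.finrank_prod, Module.finrank_fintype_fun_eq_card, Module.finrank_fintype_fun_eq_card,
      Module.finrank_fintype_fun_eq_card, Fintype.card_coe, Fintype.card_coe, Finset.card_compl]
    have := Finset.card_le_univ I
    change S.card < I.card at hlt
    omega
  obtain ⟨c, hc, hc0⟩ := (Submodule.ne_bot_iff _).mp hker
  rw [LinearMap.mem_ker] at hc
  have hcS : ∀ v ∈ S, (U *ᵥ c) v = 0 := fun v hv => congrFun (congrArg Prod.fst hc) ⟨v, hv⟩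
  have hcI : ∀ v, ¬ e v ≤ l → c v = 0 := fun v hv =>
    congrFun (congrArg Prod.snd hc) ⟨v, by simp [I]; linarith⟩
  set x := U *ᵥ c with hx
  have hUx : Uᵀ *ᵥ x = c := by rw [hx, Matrix.mulVec_mulVec, hUU, Matrix.one_mulVec]
  have hxx : x ⬝ᵥ x = c ⬝ᵥ c := by
    conv_lhs => rw [hx]
    rw [dotProduct_comm, Matrix.dotProduct_mulVec, ← Matrix.mulVec_transpose, ← hx, hUx]
  have hxN : x ⬝ᵥ (N *ᵥ x) = ∑ i, e i * c i ^ 2 := by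
    rw [hspec, ← Matrix.mulVec_mulVec, hUx, ← Matrix.mulVec_mulVec, Matrix.dotProduct_mulVec,
      ← Matrix.mulVec_transpose, hUx]
    simp only [dotProduct, Matrix.mulVec_diagonal]
    exact Finset.sum_congr rfl fun i _ => by ring
  have hle : x ⬝ᵥ (N *ᵥ x) ≤ l * (x ⬝ᵥ x) := by
    rw [hxN, hxx, dotProduct, Finset.mul_sum]
    apply Finset.sum_le_sum
    intro i _
    by_cases h : e i ≤ l
    · nlinarith [mul_self_nonneg (c i)]
    · simp [hcI i h]
  have hf := hPD (Matrix.diagonal s *ᵥ x) (fun v hv => by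
    rw [Matrix.mulVec_diagonal, hcS v hv, mul_zero]) (by
    have h1 : (Matrix.diagonal s *ᵥ x) ⬝ᵥ (L *ᵥ (Matrix.diagonal s *ᵥ x)) = x ⬝ᵥ (N *ᵥ x) := by
      rw [hN, ← Matrix.mulVec_mulVec, ← Matrix.mulVec_mulVec, Matrix.dotProduct_mulVec x,
        ← Matrix.mulVec_transpose, Matrix.diagonal_transpose]
    have h2 : ∑ i, μ i * (Matrix.diagonal s *ᵥ x) i ^ 2 = x ⬝ᵥ x := by
      rw [dotProduct]
      apply Finset.sum_congr rfl
      intro i _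
      rw [Matrix.mulVec_diagonal]
      have : μ i * (s i * s i) = 1 := by rw [hs2, mul_inv_cancel₀ (hμ i).ne']
      calc _ = (μ i * (s i * s i)) * (x i * x i) := by ring
        _ = _ := by rw [this, one_mul]
    rw [h1, h2]; exact hle)
  apply hc0
  have hx0 : x = 0 := by
    ext i
    have := congrFun hf i
    rw [Matrix.mulVec_diagonal] at this
    simpa [(hspos i).ne'] using this
  rw [← hUx, hx0, Matrix.mulVec_zero]

lemma sum_ite_mem_aux {V : Type*} [Fintype V] [DecidableEq V] (A : Finset V) (f : V → ℝ) :
    ∑ i, (if i ∈ A then f i else 0) = ∑ i ∈ A, f i := by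
  simp

lemma coarea {V : Type*} [Fintype V] [DecidableEq V] (w : V → V → ℝ) (hsymm : ∀ i j, w i j = w j i)
    (μ : V → ℝ) (c : ℝ) : ∀ (m : ℕ) (h : V → ℝ), (∀ i, 0 ≤ h i) →
    (Finset.univ.filter (fun i => h i ≠ 0)).card = m →
    (∀ A : Finset V, A.Nonempty → (∀ i ∈ A, h i ≠ 0) →
      c * ∑ i ∈ A, μ i ≤ ∑ i ∈ A, ∑ j ∈ Aᶜ, w i j) →
    2 * (c * ∑ i, μ i * h i) ≤ ∑ i, ∑ j, w i j * |h i - h j| := by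
  intro m
  induction m using Nat.strong_induction_on with
  | _ m ih =>
    intro h hnn hm hA
    set A := Finset.univ.filter (fun i => h i ≠ 0) with hAdef
    have memA : ∀ i, i ∈ A ↔ h i ≠ 0 := fun i => by simp [hAdef]
    by_cases hne : A.Nonempty
    · obtain ⟨v, hv, hmin⟩ := Finset.exists_min_image A h hne
      set t := h v with ht
      have ht0 : 0 < t := lt_of_le_of_ne (hnn v) (Ne.symm ((memA v).mp hv))
      set h' : V → ℝ := fun i => h i - if i ∈ A then t else 0 with hh'
      have hsupp : ∀ i, h' i ≠ 0 → h i ≠ 0 := by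
        intro i hi h0
        apply hi
        have : i ∉ A := by rw [memA]; simpa using h0
        simp [hh', this, h0]
      have h1 := ih (Finset.univ.filter (fun i => h' i ≠ 0)).card (by
        rw [← hm]
        apply Finset.card_lt_card
        rw [Finset.ssubset_iff_of_subset]
        · exact ⟨v, hv, by simp [hh', hv, ht]⟩
        · intro i hi
          rw [memA]
          exact hsupp i (by simpa using hi)) h' (by
        intro i
        by_cases hi : i ∈ A
        · simp only [hh', hi, if_true]; linarith [hmin i hi]
        · simp only [hh', hi, if_false]; linarith [hnn i]) rfl
        (fun B hB hB' => hA B hB (fun i hi => hsupp i (hB' i hi)))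
      have h2 := hA A hne (fun i hi => (memA i).mp hi)
      have e1 : ∑ i, μ i * h i = ∑ i, μ i * h' i + t * ∑ i ∈ A, μ i := by
        rw [Finset.mul_sum, ← sum_ite_mem_aux A (fun i => t * μ i),
          ← Finset.sum_add_distrib]
        apply Finset.sum_congr rfl
        intro i _
        simp only [hh']
        split_ifs <;> ring
      have e2 : ∀ i j, w i j * |h i - h j| = w i j * |h' i - h' j| +
          ((if i ∈ A then (if j ∈ Aᶜ then t * w i j else 0) else 0) +
           (if j ∈ A then (if i ∈ Aᶜ then t * w j i else 0) else 0)) := by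
        intro i j
        rw [hsymm j i]
        have z : ∀ i, i ∉ A → h i = 0 := fun i hi => by simpa [memA] using hi
        by_cases hi : i ∈ A <;> by_cases hj : j ∈ A
        · simp [hh', hi, hj]
        · have := hmin i hi
          simp only [hh', hi, hj, z j hj, Finset.mem_compl, if_true, if_false, not_true, not_false_iff]
          rw [abs_of_nonneg (by linarith), abs_of_nonneg (by linarith)]; ring
        · have := hmin j hj
          simp only [hh', hi, hj, z i hi, Finset.mem_compl, if_true, if_false, not_true, not_false_iff]
          rw [abs_of_nonpos (by linarith), abs_of_nonpos (by linarith)]; ring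
        · simp [hh', hi, hj]
      have e3 : ∑ i, ∑ j, (if i ∈ A then (if j ∈ Aᶜ then t * w i j else 0) else 0) =
          t * ∑ i ∈ A, ∑ j ∈ Aᶜ, w i j := by
        rw [Finset.mul_sum, ← sum_ite_mem_aux A]
        apply Finset.sum_congr rfl
        intro i _
        split_ifs
        · rw [Finset.mul_sum, ← sum_ite_mem_aux Aᶜ]
        · simp
      have e4 : ∑ i, ∑ j, w i j * |h i - h j| = ∑ i, ∑ j, w i j * |h' i - h' j| +
          2 * (t * ∑ i ∈ A, ∑ j ∈ Aᶜ, w i j) := by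
        rw [Finset.sum_congr rfl fun i _ => Finset.sum_congr rfl fun j _ => e2 i j]
        simp only [Finset.sum_add_distrib]
        rw [Finset.sum_comm (f := fun i j => if j ∈ A then (if i ∈ Aᶜ then t * w j i else 0) else 0),
          e3]
        ring
      rw [e1, e4]
      nlinarith [mul_le_mul_of_nonneg_left h2 ht0.le]
    · have z : ∀ i, h i = 0 := fun i => by
        by_contra h0; exact hne ⟨i, (memA i).mpr h0⟩
      simp [z]

lemma cheeger_one {V : Type*} [Fintype V] [DecidableEq V] (w : V → V → ℝ)
    (hsymm : ∀ i j, w i j = w j i) (hnn : ∀ i j, 0 ≤ w i j) (μ : V → ℝ) (hμ : ∀ i, 0 < μ i)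
    (τ : ℝ) (hτ : ∀ i, wdeg w i ≤ τ * μ i) (l : ℝ) (g : V → ℝ) (v : V) (hv : g v ≠ 0)
    (hE : ∑ i, ∑ j, w i j * (g i - g j) ^ 2 ≤ 2 * (l * ∑ i, μ i * g i ^ 2)) :
    ∃ A : Finset V, A.Nonempty ∧ (∀ i ∈ A, g i ≠ 0) ∧
      conductance w μ A ≤ Real.sqrt (2 * τ * l) := by
  set P := (Finset.univ : Finset (Finset V)).filter (fun A => A.Nonempty ∧ ∀ i ∈ A, g i ≠ 0)
    with hP
  have hPne : P.Nonempty := ⟨{v}, by simp [hP, hv]⟩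
  obtain ⟨A, hAP, hmin⟩ := Finset.exists_min_image P (conductance w μ) hPne
  have hA : A.Nonempty ∧ ∀ i ∈ A, g i ≠ 0 := by simpa [hP] using hAP
  refine ⟨A, hA.1, hA.2, ?_⟩
  set c := conductance w μ A with hc
  have hc0 : 0 ≤ c := div_nonneg (Finset.sum_nonneg fun i _ => Finset.sum_nonneg fun j _ => hnn i j)
    (Finset.sum_nonneg fun i _ => (hμ i).le)
  set M := ∑ i, μ i * g i ^ 2 with hM
  have hM0 : 0 < M := by
    apply Finset.sum_pos' (fun i _ => mul_nonneg (hμ i).le (sq_nonneg _))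
    exact ⟨v, Finset.mem_univ v, mul_pos (hμ v) (by positivity)⟩
  have h1 := coarea w hsymm μ c _ (fun i => g i ^ 2) (fun i => sq_nonneg _) rfl (by
    intro B hB hB'
    have h := hmin B (by simpa [hP] using ⟨hB, fun i hi => by simpa using hB' i hi⟩)
    have hpos : 0 < ∑ i ∈ B, μ i := Finset.sum_pos (fun i _ => hμ i) hB
    rwa [conductance, le_div_iff₀ hpos] at h)
  set T := ∑ i, ∑ j, w i j * |g i ^ 2 - g j ^ 2| with hT
  change 2 * (c * M) ≤ T at h1
  have hCS : T ^ 2 ≤ (∑ i, ∑ j, w i j * (g i - g j) ^ 2) * (∑ i, ∑ j, w i j * (g i + g j) ^ 2) := by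
    rw [hT]
    simp only [← Finset.sum_product']
    apply Finset.sum_sq_le_sum_mul_sum_of_sq_eq_mul
    · intro x _; exact mul_nonneg (hnn _ _) (sq_nonneg _)
    · intro x _; exact mul_nonneg (hnn _ _) (sq_nonneg _)
    · intro x _; rw [mul_pow, sq_abs]; ring
  have hdeg : ∑ i, ∑ j, w i j * g i ^ 2 ≤ τ * M := by
    rw [hM, Finset.mul_sum]
    apply Finset.sum_le_sum
    intro i _
    rw [← Finset.sum_mul, ← mul_assoc]
    exact mul_le_mul_of_nonneg_right (hτ i) (sq_nonneg _)
  have hdeg' : ∑ i, ∑ j, w i j * g j ^ 2 = ∑ i, ∑ j, w i j * g i ^ 2 := by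
    rw [Finset.sum_comm]
    exact Finset.sum_congr rfl fun i _ => Finset.sum_congr rfl fun j _ => by rw [hsymm]
  have hplus : ∑ i, ∑ j, w i j * (g i + g j) ^ 2 ≤ 4 * (τ * M) := by
    calc ∑ i, ∑ j, w i j * (g i + g j) ^ 2
        ≤ ∑ i, ∑ j, (2 * (w i j * g i ^ 2) + 2 * (w i j * g j ^ 2)) := by
          apply Finset.sum_le_sum; intro i _
          apply Finset.sum_le_sum; intro j _
          nlinarith [mul_nonneg (hnn i j) (sq_nonneg (g i - g j))]
      _ = 4 * ∑ i, ∑ j, w i j * g i ^ 2 := by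
          simp only [Finset.sum_add_distrib, ← Finset.mul_sum]
          rw [hdeg']; ring
      _ ≤ _ := by linarith
  have hm0 : 0 ≤ ∑ i, ∑ j, w i j * (g i - g j) ^ 2 :=
    Finset.sum_nonneg fun i _ => Finset.sum_nonneg fun j _ => mul_nonneg (hnn _ _) (sq_nonneg _)
  have hp0 : 0 ≤ ∑ i, ∑ j, w i j * (g i + g j) ^ 2 :=
    Finset.sum_nonneg fun i _ => Finset.sum_nonneg fun j _ => mul_nonneg (hnn _ _) (sq_nonneg _)
  have h2 : T ^ 2 ≤ (2 * (l * M)) * (4 * (τ * M)) :=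
    hCS.trans (mul_le_mul hE hplus hp0 (hm0.trans hE))
  have h3 : (2 * (c * M)) ^ 2 ≤ T ^ 2 := pow_le_pow_left₀ (by positivity) h1 2
  apply Real.le_sqrt_of_sq_le
  have h4 : c ^ 2 * (4 * M ^ 2) ≤ (2 * τ * l) * (4 * M ^ 2) := by nlinarith
  exact le_of_mul_le_mul_right h4 (by positivity)

theorem multiway_cheeger_tree (n : ℕ) (G : SimpleGraph (Fin n)) [DecidableRel G.Adj]
    (hconn : G.Connected) (htree : G.edgeFinset.card = n - 1)
    (w : Fin n → Fin n → ℝ) (hsymm : ∀ i j, w i j = w j i)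
    (hpos : ∀ i j, G.Adj i j → 0 < w i j) (hzero : ∀ i j, ¬ G.Adj i j → w i j = 0)
    (μ : Fin n → ℝ) (hμ : ∀ i, 0 < μ i)
    (κ : Fin n → ℝ) (hκ : ∀ i, 0 ≤ κ i)
    (lam : Fin n → ℝ) (hmono : Monotone lam)
    (hchar : (normLap w μ κ).charpoly = ∏ i, (X - C (lam i)))
    (k : ℕ) (hk1 : 1 ≤ k) (hk2 : k ≤ n) :
    cheeger k w μ ≤ Real.sqrt (2 * tauMax w μ * lam ⟨k - 1, by omega⟩) := by
  obtain ⟨r, p, dep, hp, hadj⟩ := exists_parent n G hconn htree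
  have hnn : ∀ i j, 0 ≤ w i j := fun i j => by
    by_cases h : G.Adj i j
    · exact (hpos i j h).le
    · exact (hzero i j h).ge
  have hdep : ∀ v, v ≠ r → dep (p v) < dep v := fun v hv => (hp v hv).1
  set l := lam ⟨k - 1, by omega⟩ with hl
  set b : Fin n → ℝ := fun c => if c = r then 0 else w c (p c) with hb
  have hbr : b r = 0 := by simp [hb]
  have hb0 : ∀ c, 0 ≤ b c := fun c => by
    simp only [hb]; split_ifs
    · exact le_rfl
    · exact hnn _ _
  set a : Fin n → ℝ := fun v => wdeg w v + κ v - l * μ v with ha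
  obtain ⟨d, hd⟩ := exists_pivot r p dep hdep a b hbr
  have hquad := quad_identity p a b d hd
  have hsum : ∀ f : Fin n → ℝ, ∑ i, ∑ j, w i j * f i * f j = 2 * ∑ c, b c * f c * f (p c) :=
    sum_edges r p dep hdep w hsymm (fun i j h => hadj i j (by
      by_contra h'; exact h (hzero i j h')))
  set S := Finset.univ.filter (fun v => d v ≤ 0) with hS
  set L : Matrix (Fin n) (Fin n) ℝ :=
    Matrix.diagonal (wdeg w) + Matrix.diagonal κ - Matrix.of w with hLdef
  have hLt : Lᵀ = L := by
    rw [hLdef, Matrix.transpose_sub, Matrix.transpose_add, Matrix.diagonal_transpose,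
      Matrix.diagonal_transpose]
    congr 1
    ext i j
    simp [hsymm i j]
  have hform : ∀ f : Fin n → ℝ, f ⬝ᵥ (L *ᵥ f) - l * ∑ i, μ i * f i ^ 2 =
      ∑ v, a v * f v ^ 2 - 2 * ∑ c, b c * f c * f (p c) := by
    intro f
    rw [← hsum, hLdef, Matrix.sub_mulVec, Matrix.add_mulVec, dotProduct_sub, dotProduct_add]
    have e1 : f ⬝ᵥ (Matrix.of w *ᵥ f) = ∑ i, ∑ j, w i j * f i * f j := by
      simp only [dotProduct, Matrix.mulVec, Finset.mul_sum, Matrix.of_apply]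
      exact Finset.sum_congr rfl fun i _ => Finset.sum_congr rfl fun j _ => by ring
    have e2 : f ⬝ᵥ (Matrix.diagonal (wdeg w) *ᵥ f) + f ⬝ᵥ (Matrix.diagonal κ *ᵥ f)
        - l * ∑ i, μ i * f i ^ 2 = ∑ v, a v * f v ^ 2 := by
      simp only [dotProduct, Matrix.mulVec_diagonal, Finset.mul_sum]
      rw [← Finset.sum_add_distrib, ← Finset.sum_sub_distrib]
      exact Finset.sum_congr rfl fun i _ => by simp only [ha]; ring
    rw [e1, ← e2]; ring
  have hcard : k ≤ S.card := by
    have h1 := eig_count L hLt μ hμ lam hchar S l (by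
      intro f hf hle
      have h2 := hform f
      rw [hquad f] at h2
      have hnonneg : ∀ c ∈ Finset.univ, 0 ≤ (if 0 < d c then d c * (f c - b c * f (p c) / d c) ^ 2
        else d c * f c ^ 2 - 2 * (b c * f c * f (p c))) := by
        intro c _
        split_ifs with h
        · positivity
        · rw [hf c (by simpa [hS] using h)]; simp
      have h3 := (Finset.sum_eq_zero_iff_of_nonneg hnonneg).mp
        (le_antisymm (by linarith) (Finset.sum_nonneg hnonneg))
      have hrec : ∀ c, f c = if d c ≤ 0 then 0 else b c * f (p c) / d c := by
        intro c
        have h4 := h3 c (Finset.mem_univ c)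
        split_ifs with h
        · exact hf c (by simpa [hS] using h)
        · rw [if_pos (not_le.mp h)] at h4
          have := (mul_eq_zero.mp h4).resolve_left (not_le.mp h).ne'
          have := pow_eq_zero_iff (two_ne_zero) |>.mp this
          linarith
      have key : ∀ m c, dep c < m → f c = 0 := by
        intro m
        induction m with
        | zero => intro c hc; omega
        | succ m ih =>
          intro c hc
          rw [hrec c]
          split_ifs with h
          · rfl
          · by_cases hcr : c = r
            · rw [hcr, hbr]; simp
            · rw [ih (p c) (by have := hdep c hcr; omega)]; simp
      ext c
      exact key _ c (Nat.lt_succ_self _))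
    refine le_trans ?_ h1
    have h5 : Finset.univ.image (Fin.castLE hk2) ⊆ Finset.univ.filter (fun i => lam i ≤ l) := by
      intro i hi
      simp only [Finset.mem_image, Finset.mem_univ, true_and] at hi
      obtain ⟨j, rfl⟩ := hi
      simp only [Finset.mem_filter, Finset.mem_univ, true_and]
      apply hmono
      rw [Fin.le_def]
      simp
      omega
    have h6 := Finset.card_le_card h5
    rwa [Finset.card_image_of_injective _ (Fin.castLE_injective hk2), Finset.card_univ,
      Fintype.card_fin] at h6
  have htau : ∀ i, wdeg w i ≤ tauMax w μ * μ i := by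
    intro i
    rw [← div_le_iff₀ (hμ i)]
    exact le_ciSup (f := fun i => wdeg w i / μ i) (Set.finite_range _).bddAbove i
  choose g hg using exists_test r p dep hdep b d hbr
  have hg0 : ∀ v u, 0 ≤ g v u := by
    intro v
    have key : ∀ m c, dep c < m → 0 ≤ g v c := by
      intro m
      induction m with
      | zero => intro c hc; omega
      | succ m ih =>
        intro c hc
        rw [hg v c]
        split_ifs with h h'
        · exact zero_le_one
        · exact le_rfl
        · by_cases hcr : c = r
          · rw [hcr, hbr]; simp
          · exact div_nonneg (mul_nonneg (hb0 c) (ih (p c) (by have := hdep c hcr; omega)))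
              (not_le.mp h').le
    exact fun u => key _ u (Nat.lt_succ_self _)
  have hgd : ∀ v ∈ S, ∀ v' ∈ S, v ≠ v' → ∀ u, g v u = 0 ∨ g v' u = 0 := by
    intro v hv v' hv' hne
    have hdv : d v ≤ 0 := by simpa [hS] using hv
    have hdv' : d v' ≤ 0 := by simpa [hS] using hv'
    have key : ∀ m c, dep c < m → g v c = 0 ∨ g v' c = 0 := by
      intro m
      induction m with
      | zero => intro c hc; omega
      | succ m ih =>
        intro c hc
        rw [hg v c, hg v' c]
        by_cases h1 : c = v
        · right
          rw [if_neg (by rw [h1]; exact hne), if_pos (by rw [h1]; exact hdv)]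
        · by_cases h2 : c = v'
          · left
            rw [if_neg h1, if_pos (by rw [h2]; exact hdv')]
          · rw [if_neg h1, if_neg h2]
            by_cases h3 : d c ≤ 0
            · simp [h3]
            · by_cases hcr : c = r
              · rw [hcr, hbr]; simp
              · rcases ih (p c) (by have := hdep c hcr; omega) with h | h
                · left; rw [h]; simp
                · right; rw [h]; simp
    exact fun u => key _ u (Nat.lt_succ_self _)
  have hsets : ∀ v : Fin n, ∃ A : Finset (Fin n), v ∈ S → A.Nonempty ∧ (∀ i ∈ A, g v i ≠ 0) ∧
      conductance w μ A ≤ Real.sqrt (2 * tauMax w μ * l) := by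
    intro v
    by_cases hv : v ∈ S
    swap
    · exact ⟨∅, fun h => absurd h hv⟩
    have hdv : d v ≤ 0 := by simpa [hS] using hv
    have hgv : g v v = 1 := by rw [hg v v]; simp
    have hq : ∑ i, a i * g v i ^ 2 - 2 * ∑ c, b c * g v c * g v (p c) ≤ 0 := by
      rw [hquad]
      apply Finset.sum_nonpos
      intro c _
      split_ifs with h
      · have hcv : c ≠ v := by rintro rfl; linarith
        have := hg v c
        rw [if_neg hcv, if_neg (not_le.mpr h)] at this
        rw [← this]; simp
      · have h1 : 0 ≤ b c * g v c * g v (p c) := mul_nonneg (mul_nonneg (hb0 c) (hg0 v c)) (hg0 v _)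
        have h2 : d c * g v c ^ 2 ≤ 0 := mul_nonpos_of_nonpos_of_nonneg (not_lt.mp h) (sq_nonneg _)
        linarith
    obtain ⟨A, h1, h2, h3⟩ := cheeger_one w hsymm hnn μ hμ (tauMax w μ) htau l (g v) v
      (by rw [hgv]; exact one_ne_zero) (by
        rw [← hsum] at hq
        have e1 : ∑ i, a i * g v i ^ 2 = ∑ i, ∑ j, w i j * g v i ^ 2 + ∑ i, κ i * g v i ^ 2
            - l * ∑ i, μ i * g v i ^ 2 := by
          rw [Finset.mul_sum, ← Finset.sum_add_distrib, ← Finset.sum_sub_distrib]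
          apply Finset.sum_congr rfl
          intro i _
          rw [← Finset.sum_mul]
          simp only [ha, wdeg]
          ring
        have e2 : ∑ i, ∑ j, w i j * g v j ^ 2 = ∑ i, ∑ j, w i j * g v i ^ 2 := by
          rw [Finset.sum_comm]
          exact Finset.sum_congr rfl fun i _ => Finset.sum_congr rfl fun j _ => by rw [hsymm]
        have e3 : ∑ i, ∑ j, w i j * (g v i - g v j) ^ 2 = ∑ i, ∑ j, w i j * g v i ^ 2 +
            ∑ i, ∑ j, w i j * g v j ^ 2 - 2 * ∑ i, ∑ j, w i j * g v i * g v j := by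
          simp only [Finset.mul_sum, ← Finset.sum_add_distrib, ← Finset.sum_sub_distrib]
          exact Finset.sum_congr rfl fun i _ => Finset.sum_congr rfl fun j _ => by ring
        have e4 : 0 ≤ ∑ i, κ i * g v i ^ 2 :=
          Finset.sum_nonneg fun i _ => mul_nonneg (hκ i) (sq_nonneg _)
        rw [e3, e2]
        linarith)
    exact ⟨A, fun _ => ⟨h1, h2, h3⟩⟩
  choose A hA using hsets
  obtain ⟨S', hS', hS'c⟩ := Finset.exists_subset_card_eq hcard
  let em := S'.orderEmbOfFin hS'c
  have hem : ∀ i, em i ∈ S := fun i => hS' (Finset.orderEmbOfFin_mem S' hS'c i)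
  have hcnn : ∀ B : Finset (Fin n), 0 ≤ conductance w μ B := fun B =>
    div_nonneg (Finset.sum_nonneg fun i _ => Finset.sum_nonneg fun j _ => hnn i j)
      (Finset.sum_nonneg fun i _ => (hμ i).le)
  have hle : cheeger k w μ ≤ ⨆ i, conductance w μ (A (em i)) := by
    apply csInf_le
    · refine ⟨0, ?_⟩
      rintro x ⟨B, _, _, rfl⟩
      exact Real.iSup_nonneg fun i => hcnn _
    · refine ⟨fun i => A (em i), fun i => (hA _ (hem i)).1, ?_, rfl⟩
      intro i j hij
      simp only [Function.onFun]
      rw [Finset.disjoint_left]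
      intro u hu hu'
      rcases hgd (em i) (hem i) (em j) (hem j) (fun h => hij (em.injective h)) u with h | h
      · exact (hA _ (hem i)).2.1 u hu h
      · exact (hA _ (hem j)).2.1 u hu' h
  exact hle.trans (Real.iSup_le (fun i => (hA _ (hem i)).2.2) (Real.sqrt_nonneg _))
end

section
/- Let G = (V,E,w,μ) be a finite weighted graph with |V| ≥ 3 and zero potential. Then for every 1 ≤ k ≤ n, the k-way Cheeger constant satisfies ρ_k(G) ≥ (τ_min − η)(1 − 1/k), where τ_min = min_{i∈V} d(i)/μ_i, and η = max{|η_2|, |η_n|} with η_1 ≥ η_2 ≥ … ≥ η_n the eigenvalues of the normalized adjacency matrix 𝒜 = M^{−1}A listed in descending order. -/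
open BigOperators Matrix Polynomial

lemma trace_bound {E ι : Type*} [AddCommGroup E] [Module ℝ E] [Fintype ι] [DecidableEq ι]
    (L N : E →ₗ[ℝ] E →ₗ[ℝ] ℝ) (hLs : ∀ x y, L x y = L y x)
    (phi : E →ₗ[ℝ] ℝ) (t : ℝ) (hL : ∀ x, 0 ≤ L x x)
    (hLN : ∀ x, phi x = 0 → t * N x x ≤ L x x)
    (u : ι → E) (hu : ∀ i j, N (u i) (u j) = if i = j then 1 else 0) (hc : 1 ≤ Fintype.card ι) :
    ((Fintype.card ι : ℝ) - 1) * t ≤ ∑ i, L (u i) (u i) := by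
  have hc' : (1 : ℝ) ≤ Fintype.card ι := by exact_mod_cast hc
  rcases le_or_gt t 0 with ht | ht
  · exact le_trans (mul_nonpos_of_nonneg_of_nonpos (by linarith) ht)
      (Finset.sum_nonneg fun i _ => hL _)
  by_cases h0 : ∀ i, phi (u i) = 0
  · have : ∑ i : ι, t ≤ ∑ i, L (u i) (u i) := by
      refine Finset.sum_le_sum fun i _ => ?_
      have := hLN (u i) (h0 i)
      simpa [hu] using this
    simp at this
    linarith
  push Not at h0
  obtain ⟨i0, hi0⟩ := h0
  set c : ι → ℝ := fun i => phi (u i) with hcdef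
  set a : ℝ := ∑ i, c i ^ 2 with ha
  have hapos : 0 < a :=
    Finset.sum_pos' (fun i _ => sq_nonneg _) ⟨i0, Finset.mem_univ _, by positivity⟩
  set p : E := ∑ i, c i • u i with hp
  have hphip : phi p = a := by
    simp [hp, ha, map_sum, hcdef, pow_two]
  have key : ∀ B : E →ₗ[ℝ] E →ₗ[ℝ] ℝ, (∀ x y, B x y = B y x) →
      ∑ i, B (u i - (c i / a) • p) (u i - (c i / a) • p) = ∑ i, B (u i) (u i) - B p p / a := by
    intro B hB
    have h1 : ∀ i, B (u i - (c i / a) • p) (u i - (c i / a) • p)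
        = B (u i) (u i) - 2 / a * (c i * B (u i) p) + c i ^ 2 * (B p p / a ^ 2) := by
      intro i
      simp only [map_sub, map_smul, LinearMap.sub_apply, LinearMap.smul_apply, smul_eq_mul,
        hB p (u i)]
      field_simp
      ring
    have h2 : ∑ i, c i * B (u i) p = B p p := by
      have : B p p = B (∑ i, c i • u i) p := by rw [← hp]
      rw [this, map_sum B, LinearMap.sum_apply]
      simp
    simp only [h1, Finset.sum_add_distrib, Finset.sum_sub_distrib, ← Finset.mul_sum,
      ← Finset.sum_mul, h2, ← ha]
    field_simp
    ring
  have hNp : ∀ i, N (u i) p = c i := by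
    intro i
    simp [hp, map_sum, hu]
  have hNp' : ∀ i, N p (u i) = c i := by
    intro i
    simp [hp, map_sum, LinearMap.sum_apply, hu]
  have hNpp : N p p = a := by
    have : N p p = N (∑ i, c i • u i) p := by rw [← hp]
    rw [this, map_sum N, LinearMap.sum_apply]
    simp [hNp, ha, pow_two]
  have hNsum : ∑ i, N (u i - (c i / a) • p) (u i - (c i / a) • p) = Fintype.card ι - 1 := by
    have h1 : ∀ i, N (u i - (c i / a) • p) (u i - (c i / a) • p) = 1 - c i ^ 2 / a := by
      intro i
      simp only [map_sub, map_smul, LinearMap.sub_apply, LinearMap.smul_apply, smul_eq_mul,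
        hNp, hNp', hNpp, hu]
      simp
      field_simp
      ring
    simp only [h1, Finset.sum_sub_distrib, ← Finset.sum_div, ← ha]
    simp [hapos.ne']
  have hsum : ∑ i, t * N (u i - (c i / a) • p) (u i - (c i / a) • p)
      ≤ ∑ i, L (u i - (c i / a) • p) (u i - (c i / a) • p) := by
    refine Finset.sum_le_sum fun i _ => hLN _ ?_
    rw [map_sub, map_smul, hphip, smul_eq_mul, div_mul_cancel₀ _ hapos.ne']
    simp [hcdef]
  rw [← Finset.mul_sum, hNsum, key L hLs] at hsum
  have := div_nonneg (hL p) hapos.le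
  linarith

lemma herm_bound {n : ℕ} (B : Matrix (Fin n) (Fin n) ℝ) (hB : B.IsHermitian)
    (eta : Fin n → ℝ) (hchar : B.charpoly = ∏ i, (X - C (eta i))) (i0 : Fin n) (e : ℝ)
    (he : ∀ i, i ≠ i0 → eta i ≤ e) :
    ∃ v : Fin n → ℝ, ∀ x : Fin n → ℝ, v ⬝ᵥ x = 0 → x ⬝ᵥ (B *ᵥ x) ≤ e * (x ⬝ᵥ x) := by
  have h1 := hB.charpoly_eq
  rw [hchar] at h1
  have h2 : Finset.univ.val.map eta = Finset.univ.val.map hB.eigenvalues := by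
    have := congrArg Polynomial.roots h1
    have hr : ∀ f : Fin n → ℝ, (∏ i, (X - C (f i))).roots = Finset.univ.val.map f := by
      intro f
      rw [← Polynomial.roots_multiset_prod_X_sub_C (Finset.univ.val.map f), Multiset.map_map]
      rfl
    rw [← hr, this]
    exact hr _
  obtain ⟨σ, hσ⟩ : ∃ σ : Equiv.Perm (Fin n), hB.eigenvalues = eta ∘ σ := by
    have hcard : ∀ c, Fintype.card {a // hB.eigenvalues a = c} = Fintype.card {b // eta b = c} := by
      intro c
      have h3 := congrArg (Multiset.count c) h2
      rw [Multiset.count_map, Multiset.count_map] at h3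
      rw [Fintype.card_subtype, Fintype.card_subtype, Finset.card, Finset.card, Finset.filter_val,
        Finset.filter_val]
      simp only [eq_comm (b := c)]
      exact h3.symm
    refine ⟨Equiv.ofFiberEquiv (f := hB.eigenvalues) (g := eta)
      fun c => Fintype.equivOfCardEq (hcard c), ?_⟩
    ext a
    exact (Equiv.ofFiberEquiv_map _ a).symm
  set b := hB.eigenvectorBasis with hb
  refine ⟨(b (σ.symm i0)).ofLp, fun x hx => ?_⟩
  have hinner : ∀ (y z : EuclideanSpace ℝ (Fin n)), inner ℝ y z = y.ofLp ⬝ᵥ z.ofLp := by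
    intro y z
    simp [PiLp.inner_apply, dotProduct, mul_comm]
  have hexp : ∀ y z : Fin n → ℝ, y ⬝ᵥ z = ∑ j, (y ⬝ᵥ (b j).ofLp) * ((b j).ofLp ⬝ᵥ z) := by
    intro y z
    have := b.sum_inner_mul_inner (WithLp.toLp 2 y) (WithLp.toLp 2 z)
    simp only [hinner] at this
    exact this.symm
  have hBj : ∀ j, (b j).ofLp ⬝ᵥ (B *ᵥ x) = hB.eigenvalues j * ((b j).ofLp ⬝ᵥ x) := by
    intro j
    have hT : Bᵀ = B := by simpa [Matrix.IsHermitian] using hB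
    rw [Matrix.dotProduct_mulVec, ← Matrix.mulVec_transpose, hT, hb,
      hB.mulVec_eigenvectorBasis, smul_dotProduct, smul_eq_mul]
  rw [hexp x (B *ᵥ x), hexp x x, Finset.mul_sum]
  refine Finset.sum_le_sum fun j _ => ?_
  rw [hBj, dotProduct_comm x]
  by_cases hj : σ j = i0
  · have : j = σ.symm i0 := by simp [← hj]
    rw [this, hx]; simp
  · have := he _ hj
    rw [hσ]
    simp only [Function.comp]
    nlinarith [mul_self_nonneg ((b j).ofLp ⬝ᵥ x)]

lemma weighted_bound {n : ℕ} (w : Fin n → Fin n → ℝ) (hsymm : ∀ i j, w i j = w j i)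
    (μ : Fin n → ℝ) (hμ : ∀ i, 0 < μ i) (eta : Fin n → ℝ)
    (hchar : ((Matrix.diagonal μ)⁻¹ * Matrix.of w).charpoly = ∏ i, (X - C (eta i)))
    (i0 : Fin n) (e : ℝ) (he : ∀ i, i ≠ i0 → eta i ≤ e) :
    ∃ g : Fin n → ℝ, ∀ f : Fin n → ℝ, g ⬝ᵥ f = 0 →
      f ⬝ᵥ (Matrix.of w *ᵥ f) ≤ e * (f ⬝ᵥ (Matrix.diagonal μ *ᵥ f)) := by
  set s : Fin n → ℝ := fun i => √(μ i) with hs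
  have hspos : ∀ i, 0 < s i := fun i => Real.sqrt_pos.2 (hμ i)
  have hss : ∀ i, s i * s i = μ i := fun i => Real.mul_self_sqrt (hμ i).le
  set S := Matrix.diagonal (fun i => (s i)⁻¹) with hS
  have hinv : (Matrix.diagonal μ)⁻¹ = S * S := by
    apply Matrix.inv_eq_right_inv
    rw [hS, Matrix.diagonal_mul_diagonal, Matrix.diagonal_mul_diagonal, ← Matrix.diagonal_one]
    congr 1
    ext i
    have := (hspos i).ne'
    rw [← hss]
    field_simp
  have hBh : (S * Matrix.of w * S).IsHermitian := by
    ext i j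
    simp [hS, hsymm i j]
    ring
  have hch : (S * Matrix.of w * S).charpoly = ∏ i, (X - C (eta i)) := by
    rw [Matrix.charpoly_mul_comm, ← Matrix.mul_assoc, ← hinv, hchar]
  obtain ⟨v, hv⟩ := herm_bound _ hBh eta hch i0 e he
  refine ⟨fun i => v i * s i, fun f hf => ?_⟩
  have h := hv (fun i => s i * f i) (by
    rw [← hf]; simp [dotProduct, mul_assoc])
  have hSx : S *ᵥ (fun i => s i * f i) = f := by
    ext i
    have := (hspos i).ne'
    simp [hS, Matrix.mulVec_diagonal]
    field_simp
  have hxS : (fun i => s i * f i) ᵥ* S = f := by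
    ext i
    have := (hspos i).ne'
    simp [hS, Matrix.vecMul_diagonal]
    field_simp
  rw [← Matrix.mulVec_mulVec, ← Matrix.mulVec_mulVec, hSx, Matrix.dotProduct_mulVec, hxS] at h
  convert h using 2
  simp only [dotProduct, Matrix.mulVec_diagonal]
  refine Finset.sum_congr rfl fun i _ => ?_
  rw [← hss]; ring

lemma lap_nonneg {n : ℕ} (w : Fin n → Fin n → ℝ) (hsymm : ∀ i j, w i j = w j i)
    (hw : ∀ i j, 0 ≤ w i j) (f : Fin n → ℝ) :
    0 ≤ ∑ i, ∑ j, w i j * f i * f i - ∑ i, ∑ j, w i j * f i * f j := by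
  have h1 : ∑ i, ∑ j, w i j * f i * f i = ∑ i, ∑ j, w i j * f j * f j := by
    rw [Finset.sum_comm]
    refine Finset.sum_congr rfl fun i _ => Finset.sum_congr rfl fun j _ => ?_
    rw [hsymm]
  have h2 : 0 ≤ ∑ i, ∑ j, w i j * (f i - f j) ^ 2 :=
    Finset.sum_nonneg fun i _ => Finset.sum_nonneg fun j _ => mul_nonneg (hw i j) (sq_nonneg _)
  have h3 : ∑ i, ∑ j, w i j * (f i - f j) ^ 2 = ∑ i, ∑ j, w i j * f i * f i
      + ∑ i, ∑ j, w i j * f j * f j - 2 * ∑ i, ∑ j, w i j * f i * f j := by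
    simp only [Finset.mul_sum, ← Finset.sum_add_distrib, ← Finset.sum_sub_distrib]
    refine Finset.sum_congr rfl fun i _ => Finset.sum_congr rfl fun j _ => ?_
    ring
  linarith

lemma cut_eq {n : ℕ} (w : Fin n → Fin n → ℝ) (A : Finset (Fin n)) (r : ℝ) :
    ∑ i, ∑ j, w i j * (if i ∈ A then r else 0) * (if i ∈ A then r else 0)
      - ∑ i, ∑ j, w i j * (if i ∈ A then r else 0) * (if j ∈ A then r else 0)
      = r ^ 2 * ∑ i ∈ A, ∑ j ∈ Aᶜ, w i j := by
  rw [← Finset.sum_sub_distrib, ← Finset.sum_filter_add_sum_filter_not Finset.univ (· ∈ A)]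
  rw [Finset.sum_eq_zero (s := Finset.univ.filter (¬ · ∈ A)), add_zero, Finset.mul_sum]
  · have : Finset.univ.filter (· ∈ A) = A := by ext; simp
    rw [this]
    refine Finset.sum_congr rfl fun i hi => ?_
    rw [← Finset.sum_sub_distrib, Finset.mul_sum, ← Finset.sum_add_sum_compl A,
      Finset.sum_eq_zero (s := A), zero_add]
    · refine Finset.sum_congr rfl fun j hj => ?_
      rw [Finset.mem_compl] at hj
      simp [hi, hj]; ring
    · intro j hj
      simp [hi, hj]
  · intro i hi
    simp at hi
    simp [hi]

/-- **Spectral lower bound for multi-way Cheeger constants.** For a finite weighted graph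
with `|V| ≥ 3` and zero potential, with `η = max {|η₂|, |η_n|}` for the eigenvalues
`η₁ ≥ … ≥ η_n` of the normalized adjacency matrix `𝒜 = M⁻¹ A` and
`τ_min = min_i d(i)/μ_i`, one has `ρ_k(G) ≥ (τ_min - η)(1 - 1/k)`. -/
theorem cheeger_lower_bound (n : ℕ) (hn : 3 ≤ n)
    (G : SimpleGraph (Fin n)) [DecidableRel G.Adj]
    (w : Fin n → Fin n → ℝ) (hsymm : ∀ i j, w i j = w j i)
    (hpos : ∀ i j, G.Adj i j → 0 < w i j) (hzero : ∀ i j, ¬ G.Adj i j → w i j = 0)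
    (μ : Fin n → ℝ) (hμ : ∀ i, 0 < μ i)
    (eta : Fin n → ℝ) (hanti : Antitone eta)
    (hchar : ((Matrix.diagonal μ)⁻¹ * Matrix.of w).charpoly = ∏ i, (X - C (eta i)))
    (k : ℕ) (hk₁ : 1 ≤ k) (hk₂ : k ≤ n) :
    ((⨅ i, (∑ j, w i j) / μ i) - max |eta ⟨1, by omega⟩| |eta ⟨n - 1, by omega⟩|) *
        (1 - 1 / (k : ℝ)) ≤
      cheeger k w μ := by
  have hw : ∀ i j, 0 ≤ w i j := by
    intro i j
    by_cases h : G.Adj i j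
    · exact (hpos i j h).le
    · exact (hzero i j h).ge
  set e := max |eta ⟨1, by omega⟩| |eta ⟨n - 1, by omega⟩| with he
  set τ := ⨅ i, (∑ j, w i j) / μ i with hτ
  have hτi : ∀ i, τ * μ i ≤ ∑ j, w i j := by
    intro i
    rw [← le_div_iff₀ (hμ i)]
    exact ciInf_le (Set.finite_range _).bddBelow i
  obtain ⟨g, hg⟩ := weighted_bound w hsymm μ hμ eta hchar ⟨0, by omega⟩ e (by
    intro i hi
    refine le_trans (hanti (a := ⟨1, by omega⟩) ?_) ((le_abs_self _).trans (le_max_left _ _))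
    rw [Fin.le_def]
    have : i.val ≠ 0 := fun h => hi (Fin.ext h)
    simp only
    omega)
  unfold cheeger
  apply le_csInf
  · refine ⟨_, fun i => {Fin.castLE hk₂ i}, fun i => Finset.singleton_nonempty _, ?_, rfl⟩
    intro i j hij
    simp [Function.onFun, hij.symm, hij]
  rintro r ⟨A, hA, hdis, rfl⟩
  have hm : ∀ i, 0 < ∑ a ∈ A i, μ a := fun i => Finset.sum_pos (fun a _ => hμ a) (hA i)
  set D := Matrix.diagonal (fun i => ∑ j, w i j) with hD
  have hLexp : ∀ f : Fin n → ℝ, Matrix.toBilin' (D - Matrix.of w) f f =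
      ∑ i, ∑ j, w i j * f i * f i - ∑ i, ∑ j, w i j * f i * f j := by
    intro f
    rw [Matrix.toBilin'_apply', Matrix.sub_mulVec, dotProduct_sub]
    congr 1
    · simp only [dotProduct, hD, Matrix.mulVec_diagonal, Finset.mul_sum, Finset.sum_mul]
      refine Finset.sum_congr rfl fun i _ => Finset.sum_congr rfl fun j _ => ?_
      ring
    · simp only [dotProduct, Matrix.mulVec, Finset.mul_sum, Matrix.of_apply]
      refine Finset.sum_congr rfl fun i _ => Finset.sum_congr rfl fun j _ => ?_
      ring
  set u : Fin k → Fin n → ℝ :=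
    fun i a => if a ∈ A i then (√(∑ a ∈ A i, μ a))⁻¹ else 0 with hu
  have hmain := trace_bound (Matrix.toBilin' (D - Matrix.of w)) (Matrix.toBilin' (Matrix.diagonal μ))
    (by
      intro x y
      have hT : (D - Matrix.of w)ᵀ = D - Matrix.of w := by
        ext i j
        simp [hD, Matrix.diagonal_apply, hsymm i j, eq_comm]
        grind
      rw [Matrix.toBilin'_apply', Matrix.toBilin'_apply', Matrix.dotProduct_mulVec,
        ← Matrix.mulVec_transpose, hT, dotProduct_comm])
    (dotProductBilin ℝ ℝ g) (τ - e)
    (by intro x; rw [hLexp]; exact lap_nonneg w hsymm hw x)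
    (by
      intro x hx
      have h1 := hg x (by simpa using hx)
      rw [Matrix.toBilin'_apply', Matrix.toBilin'_apply', Matrix.sub_mulVec, dotProduct_sub]
      have h2 : τ * (x ⬝ᵥ (Matrix.diagonal μ *ᵥ x)) ≤ x ⬝ᵥ (D *ᵥ x) := by
        simp only [dotProduct, hD, Matrix.mulVec_diagonal, Finset.mul_sum]
        refine Finset.sum_le_sum fun i _ => ?_
        nlinarith [mul_le_mul_of_nonneg_right (hτi i) (mul_self_nonneg (x i))]
      linarith)
    u
    (by
      intro i j
      rw [Matrix.toBilin'_apply']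
      simp only [dotProduct, Matrix.mulVec_diagonal]
      split_ifs with hij
      · subst hij
        have h1 : ∀ a, u i a * (μ a * u i a)
            = if a ∈ A i then μ a * (∑ a ∈ A i, μ a)⁻¹ else 0 := by
          intro a
          simp only [hu]
          split_ifs
          · have := Real.mul_self_sqrt (hm i).le
            conv_rhs => rw [← this]
            rw [mul_inv]; ring
          · simp
        simp only [h1]
        rw [Finset.sum_ite_mem, Finset.univ_inter, ← Finset.sum_mul, mul_inv_cancel₀ (hm i).ne']
      · refine Finset.sum_eq_zero fun a _ => ?_
        simp only [hu]
        by_cases h1 : a ∈ A i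
        · have := Finset.disjoint_left.1 (hdis hij) h1
          simp [this]
        · simp [h1])
    (by simpa using hk₁)
  have hcond : ∀ i, Matrix.toBilin' (D - Matrix.of w) (u i) (u i) = conductance w μ (A i) := by
    intro i
    rw [hLexp]
    simp only [hu]
    rw [cut_eq, inv_pow, Real.sq_sqrt (hm i).le, conductance, div_eq_inv_mul]
  simp only [hcond, Fintype.card_fin] at hmain
  have hle : ∑ i, conductance w μ (A i) ≤ ∑ _i : Fin k, ⨆ i, conductance w μ (A i) :=
    Finset.sum_le_sum fun i _ =>
      le_ciSup (f := fun i => conductance w μ (A i)) (Set.finite_range _).bddAbove i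
  simp only [Finset.sum_const, Finset.card_univ, Fintype.card_fin, nsmul_eq_mul] at hle
  have hk0 : (0 : ℝ) < k := by exact_mod_cast hk₁
  have h3 : (τ - e) * (1 - 1 / (k : ℝ)) = ((k : ℝ) - 1) * (τ - e) / k := by
    field_simp
  rw [h3, div_le_iff₀ hk0]
  linarith
end

section
/- Let G = (V,E,w,μ) be a finite weighted graph with |V| ≥ 3, zero potential, vertex measure μ_i = d(i) for all i, and such that (V,E) is not a complete graph. Then for every 1 ≤ k ≤ n, ρ_k(G) ≥ (1 − 1/k) · min{λ_2(G), 2 − λ_n(G)}, where λ_1(G) ≤ … ≤ λ_n(G) are the eigenvalues of the normalized Laplacian of G. -/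
open BigOperators Matrix Polynomial

/-- The normalized Laplacian `𝔏 = M⁻¹ (D - A)` for the vertex measure `μ = d`. -/
noncomputable def normLapDeg {V : Type*} [Fintype V] [DecidableEq V]
    (w : V → V → ℝ) : Matrix V V ℝ :=
  (Matrix.diagonal (wdeg w))⁻¹ * (Matrix.diagonal (wdeg w) - Matrix.of w)

lemma quad_lower {n : ℕ} (N : Matrix (Fin n) (Fin n) ℝ) (hN : N.IsHermitian)
    (s y : Fin n → ℝ) (hs : s ≠ 0) (hNs : N *ᵥ s = 0) (hys : y ⬝ᵥ s = 0) (t : ℝ) (ht : 0 < t)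
    (huniq : ∀ i j, hN.eigenvalues i < t → hN.eigenvalues j < t → i = j) :
    t * (y ⬝ᵥ y) ≤ y ⬝ᵥ (N *ᵥ y) := by
  set b := hN.eigenvectorBasis with hb
  set c : (Fin n → ℝ) → Fin n → ℝ := fun x i => x ⬝ᵥ (b i : EuclideanSpace ℝ (Fin n)).ofLp with hc
  have parseval : ∀ x z : Fin n → ℝ, x ⬝ᵥ z = ∑ i, c x i * c z i := by
    intro x z
    have := b.sum_inner_mul_inner (WithLp.toLp 2 x) (WithLp.toLp 2 z)
    simp only [EuclideanSpace.inner_eq_star_dotProduct, star_trivial] at this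
    rw [dotProduct_comm, ← this]
    refine Finset.sum_congr rfl fun i _ => ?_
    simp only [hc]
    rw [dotProduct_comm x]
  have hNc : ∀ x i, c (N *ᵥ x) i = hN.eigenvalues i * c x i := by
    intro x i
    simp only [hc]
    have h1 := hN.mulVec_eigenvectorBasis i
    have hT : Nᵀ = N := by simpa using hN.eq
    rw [dotProduct_comm, dotProduct_mulVec, ← mulVec_transpose, hT, ← hb] at *
    rw [h1, smul_dotProduct, smul_eq_mul, dotProduct_comm]
  have hsc : ∀ i, hN.eigenvalues i * c s i = 0 := by
    intro i
    rw [← hNc, hNs]; simp [hc]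
  have key : ∀ i, hN.eigenvalues i < t → c y i = 0 := by
    intro i hi
    have hz : ∀ j, j ≠ i → c s j = 0 := by
      intro j hj
      have h2 : t ≤ hN.eigenvalues j := by
        by_contra h
        exact hj (huniq j i (not_le.mp h) hi)
      rcases mul_eq_zero.mp (hsc j) with h | h
      · linarith
      · exact h
    have h1 : c y i * c s i = 0 := by
      rw [← hys, parseval, Finset.sum_eq_single i]
      · intro j _ hj; rw [hz j hj, mul_zero]
      · simp
    have h3 : c s i ≠ 0 := by
      intro h
      apply hs
      rw [← dotProduct_self_eq_zero, parseval]
      refine Finset.sum_eq_zero fun j _ => ?_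
      by_cases hj : j = i
      · rw [hj, h, mul_zero]
      · rw [hz j hj, mul_zero]
    exact (mul_eq_zero.mp h1).resolve_right h3
  rw [parseval y y, parseval y (N *ᵥ y), Finset.mul_sum]
  refine Finset.sum_le_sum fun i _ => ?_
  rw [hNc]
  by_cases hi : hN.eigenvalues i < t
  · rw [key i hi]; simp
  · nlinarith [mul_self_nonneg (c y i), not_lt.mp hi]

lemma eig_uniq {n : ℕ} (hn : 3 ≤ n) (N : Matrix (Fin n) (Fin n) ℝ) (hN : N.IsHermitian)
    (lam : Fin n → ℝ) (hmono : Monotone lam)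
    (hchar : N.charpoly = ∏ i, (X - C (lam i))) :
    ∀ i j, hN.eigenvalues i < lam ⟨1, by omega⟩ → hN.eigenvalues j < lam ⟨1, by omega⟩ → i = j := by
  have h1 : Multiset.map hN.eigenvalues Finset.univ.val = Multiset.map lam Finset.univ.val := by
    have h2 : N.charpoly.roots = Multiset.map lam Finset.univ.val := by
      rw [hchar]
      have := roots_multiset_prod_X_sub_C (Multiset.map lam Finset.univ.val)
      rw [Multiset.map_map] at this
      exact this
    rw [← h2, hN.roots_charpoly_eq_eigenvalues]
    rfl
  have h3 := congrArg (Multiset.countP (· < lam ⟨1, by omega⟩)) h1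
  rw [Multiset.countP_map, Multiset.countP_map] at h3
  change (Finset.univ.filter fun i => hN.eigenvalues i < lam ⟨1, by omega⟩).card
    = (Finset.univ.filter fun i => lam i < lam ⟨1, by omega⟩).card at h3
  have h4 : (Finset.univ.filter fun i => lam i < lam ⟨1, by omega⟩).card ≤ 1 := by
    rw [Finset.card_le_one]
    have : ∀ a, lam a < lam ⟨1, by omega⟩ → a.val = 0 := by
      intro a ha
      by_contra h
      have : (⟨1, by omega⟩ : Fin n) ≤ a := by rw [Fin.le_def]; simp; omega
      exact absurd (hmono this) (not_le.mpr ha)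
    intro a ha b hb
    simp only [Finset.mem_filter, Finset.mem_univ, true_and] at ha hb
    ext; rw [this a ha, this b hb]
  rw [← h3, Finset.card_le_one] at h4
  intro i j hi hj
  exact h4 i (by simpa using hi) j (by simpa using hj)

lemma set_bound {n : ℕ} (hn : 3 ≤ n)
    (w : Fin n → Fin n → ℝ) (hsymm : ∀ i j, w i j = w j i)
    (hd : ∀ i, 0 < wdeg w i)
    (lam : Fin n → ℝ) (hmono : Monotone lam)
    (hchar : (normLapDeg w).charpoly = ∏ i, (X - C (lam i)))
    (ht : 0 < lam ⟨1, by omega⟩) (A : Finset (Fin n)) :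
    lam ⟨1, by omega⟩ * ((∑ i ∈ A, wdeg w i) * (1 - (∑ i ∈ A, wdeg w i) / ∑ i, wdeg w i)) ≤
      ∑ i ∈ A, ∑ j ∈ Aᶜ, w i j := by
  set d := wdeg w with hdd
  set s : Fin n → ℝ := fun i => √(d i) with hs
  set L : Matrix (Fin n) (Fin n) ℝ := diagonal d - Matrix.of w with hL
  set R : Matrix (Fin n) (Fin n) ℝ := diagonal (fun i => (s i)⁻¹) with hR
  have hspos : ∀ i, 0 < s i := fun i => Real.sqrt_pos.mpr (hd i)
  have hss : ∀ i, s i * s i = d i := fun i => Real.mul_self_sqrt (hd i).le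
  have hV : 0 < ∑ i, d i :=
    Finset.sum_pos (fun i _ => hd i) ⟨⟨0, by omega⟩, Finset.mem_univ _⟩
  have hLT : Lᵀ = L := by
    ext i j
    by_cases h : i = j
    · subst h; simp [hL]
    · simp [hL, h, Ne.symm h, hsymm j i]
  have hNT : (R * L * R)ᵀ = R * L * R := by
    rw [transpose_mul, transpose_mul, hLT, hR, diagonal_transpose, Matrix.mul_assoc]
  have hN : (R * L * R).IsHermitian := by
    rw [Matrix.IsHermitian, conjTranspose_eq_transpose_of_trivial, hNT]
  have hDinv : (diagonal d)⁻¹ = R * R := by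
    apply Matrix.inv_eq_right_inv
    rw [hR, diagonal_mul_diagonal, diagonal_mul_diagonal, ← diagonal_one]
    congr 1
    ext i
    have := (hspos i).ne'
    rw [← hss i]
    field_simp
  have hcN : (R * L * R).charpoly = ∏ i, (X - C (lam i)) := by
    rw [← hchar, Matrix.charpoly_mul_comm, normLapDeg, ← hdd, hDinv, Matrix.mul_assoc]
  have hNmul : ∀ f : Fin n → ℝ, ∀ i, ((R * L * R) *ᵥ (fun j => s j * f j)) i
      = (s i)⁻¹ * (d i * f i - ∑ j, w i j * f j) := by
    intro f i
    have h1 : R *ᵥ (fun j => s j * f j) = f := by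
      ext j
      rw [hR, mulVec_diagonal, ← mul_assoc, inv_mul_cancel₀ (hspos j).ne', one_mul]
    rw [← mulVec_mulVec, h1, ← mulVec_mulVec, hR, mulVec_diagonal, hL, sub_mulVec]
    simp only [Pi.sub_apply, mulVec_diagonal]
    rfl
  have hNs : (R * L * R) *ᵥ s = 0 := by
    ext i
    have := hNmul (fun _ => 1) i
    simp only [mul_one] at this
    change ((R * L * R) *ᵥ fun j => s j) i = 0
    rw [this, hdd, wdeg, sub_self, mul_zero]
  set f : Fin n → ℝ := fun i => if i ∈ A then 1 else 0 with hf
  set a : ℝ := (∑ i ∈ A, d i) / ∑ i, d i with ha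
  have haV : a * ∑ i, d i = ∑ i ∈ A, d i := div_mul_cancel₀ _ hV.ne'
  set z : Fin n → ℝ := fun j => s j * f j with hz
  have hzs : z ⬝ᵥ s = ∑ i ∈ A, d i := by
    simp only [dotProduct, hz, hf, mul_ite, ite_mul, mul_one, mul_zero, zero_mul, hss]
    simp
  have hzz : z ⬝ᵥ z = ∑ i ∈ A, d i := by
    simp only [dotProduct, hz, hf, mul_ite, ite_mul, mul_one, mul_zero, zero_mul, hss]
    simp
  have hsd : s ⬝ᵥ s = ∑ i, d i := by
    simp only [dotProduct, hss]
  have hsN : ∀ x, s ⬝ᵥ ((R * L * R) *ᵥ x) = 0 := by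
    intro x
    rw [dotProduct_mulVec, ← mulVec_transpose, hNT, hNs, zero_dotProduct]
  have hzN : z ⬝ᵥ ((R * L * R) *ᵥ z) = ∑ i ∈ A, ∑ j ∈ Aᶜ, w i j := by
    simp only [dotProduct]
    rw [← Finset.sum_subset (Finset.subset_univ A)]
    · refine Finset.sum_congr rfl fun i hi => ?_
      rw [hz, hNmul f i]
      have h1 : f i = 1 := by simp [hf, hi]
      have h2 : ∑ j, w i j * f j = ∑ j ∈ A, w i j := by simp [hf]
      have h3 : d i = ∑ j ∈ A, w i j + ∑ j ∈ Aᶜ, w i j := by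
        rw [Finset.sum_add_sum_compl, hdd, wdeg]
      simp only [h1, h2, mul_one]
      rw [← mul_assoc, mul_inv_cancel₀ (hspos i).ne', h3]
      ring
    · intro i _ hi
      simp [hz, hf, hi]
  have hys : (z - a • s) ⬝ᵥ s = 0 := by
    rw [sub_dotProduct, smul_dotProduct, hzs, hsd, smul_eq_mul, haV, sub_self]
  have hs0 : s ≠ 0 := by
    intro h
    have := hspos ⟨0, by omega⟩
    rw [h] at this
    simp at this
  have main := quad_lower (R * L * R) hN s (z - a • s) hs0 hNs hys _ ht
    (eig_uniq hn _ hN lam hmono hcN)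
  have e1 : (z - a • s) ⬝ᵥ (z - a • s) = (∑ i ∈ A, d i) * (1 - a) := by
    rw [dotProduct_sub, dotProduct_smul, hys, sub_dotProduct, smul_dotProduct,
      dotProduct_comm s z, hzs, hzz]
    simp only [smul_eq_mul]
    ring
  have e2 : (z - a • s) ⬝ᵥ ((R * L * R) *ᵥ (z - a • s)) = ∑ i ∈ A, ∑ j ∈ Aᶜ, w i j := by
    rw [mulVec_sub, mulVec_smul, hNs, smul_zero, sub_zero, sub_dotProduct, smul_dotProduct, hsN,
      hzN]
    simp
  rw [e1, e2] at main
  exact main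

/-- **Spectral lower bound for multi-way Cheeger constants, normalized case.** For a finite
weighted non-complete graph with `|V| ≥ 3`, zero potential and vertex measure `μ = d`, one has
`ρ_k(G) ≥ (1 - 1/k) ⬝ min {λ₂(G), 2 - λ_n(G)}`, where `λ₁ ≤ … ≤ λ_n` are the eigenvalues of
the normalized Laplacian. -/
theorem cheeger_lower_bound_normalized (n : ℕ) (hn : 3 ≤ n)
    (G : SimpleGraph (Fin n)) [DecidableRel G.Adj] (hnc : G ≠ ⊤)
    (w : Fin n → Fin n → ℝ) (hsymm : ∀ i j, w i j = w j i)
    (hpos : ∀ i j, G.Adj i j → 0 < w i j) (hzero : ∀ i j, ¬ G.Adj i j → w i j = 0)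
    (hd : ∀ i, 0 < wdeg w i)
    (lam : Fin n → ℝ) (hmono : Monotone lam)
    (hchar : (normLapDeg w).charpoly = ∏ i, (X - C (lam i)))
    (k : ℕ) (hk₁ : 1 ≤ k) (hk₂ : k ≤ n) :
    (1 - 1 / (k : ℝ)) * min (lam ⟨1, by omega⟩) (2 - lam ⟨n - 1, by omega⟩) ≤
      cheeger k w (wdeg w) := by
  have hw : ∀ i j, 0 ≤ w i j := by
    intro i j
    by_cases h : G.Adj i j
    · exact (hpos i j h).le
    · exact (hzero i j h).ge
  have hk : (0 : ℝ) < k := by exact_mod_cast hk₁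
  have hk1 : 0 ≤ 1 - 1 / (k : ℝ) := by
    have h : (1 : ℝ) ≤ k := by exact_mod_cast hk₁
    rw [sub_nonneg, div_le_one hk]
    exact h
  have hV : 0 < ∑ i, wdeg w i :=
    Finset.sum_pos (fun i _ => hd i) ⟨⟨0, by omega⟩, Finset.mem_univ _⟩
  apply le_csInf
  · refine ⟨_, fun i => {Fin.castLE hk₂ i}, fun i => Finset.singleton_nonempty _, ?_, rfl⟩
    intro i j hij
    simp only [Function.onFun, Finset.disjoint_singleton]
    exact fun h => hij (Fin.castLE_injective hk₂ h)
  rintro r ⟨A, hne, hdisj, rfl⟩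
  have hex : ∃ i ∈ (Finset.univ : Finset (Fin k)),
      ∑ v ∈ A i, wdeg w v ≤ (∑ v, wdeg w v) / k := by
    apply Finset.exists_le_of_sum_le ⟨⟨0, hk₁⟩, Finset.mem_univ _⟩
    rw [Finset.sum_const, Finset.card_univ, Fintype.card_fin, nsmul_eq_mul,
      mul_div_cancel₀ _ hk.ne', ← Finset.sum_biUnion (fun i _ j _ hij => hdisj hij)]
    exact Finset.sum_le_sum_of_subset_of_nonneg (Finset.subset_univ _) (fun i _ _ => (hd i).le)
  obtain ⟨i, -, hi⟩ := hex
  refine le_trans ?_ (le_ciSup (Set.finite_range _).bddAbove i)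
  have hA : 0 < ∑ v ∈ A i, wdeg w v := Finset.sum_pos (fun v _ => hd v) (hne i)
  refine le_trans (mul_le_mul_of_nonneg_left (min_le_left _ _) hk1) ?_
  rw [conductance, le_div_iff₀ hA]
  rcases le_or_gt (lam ⟨1, by omega⟩) 0 with ht | ht
  · refine le_trans ?_ (Finset.sum_nonneg fun i _ => Finset.sum_nonneg fun j _ => hw i j)
    exact mul_nonpos_of_nonpos_of_nonneg (mul_nonpos_of_nonneg_of_nonpos hk1 ht) hA.le
  · refine le_trans ?_ (set_bound hn w hsymm hd lam hmono hchar ht (A i))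
    have h1 : (∑ v ∈ A i, wdeg w v) / ∑ v, wdeg w v ≤ 1 / k := by
      rw [div_le_iff₀ hV]
      calc _ ≤ _ := hi
        _ = _ := by ring
    calc _ = lam ⟨1, by omega⟩ * ((∑ v ∈ A i, wdeg w v) * (1 - 1 / (k : ℝ))) := by ring
      _ ≤ _ := by gcongr
end

section
/- Let G = (V,E,w,μ) be a finite weighted graph with zero potential, let η = max{|η_2|, |η_n|} where η_1 ≥ … ≥ η_n are the eigenvalues of the normalized adjacency matrix 𝒜 = M^{−1}A, and let τ_min = min_{i∈V} d(i)/μ_i. Then for every nonempty proper subset A_1 ⊂ V, writing α = μ(A_1)/μ(V) with μ(S) = Σ_{x∈S} μ_x, the weighted edge boundary satisfies E(A_1, V∖A_1) := Σ_{x∈A_1} Σ_{y∉A_1, {x,y}∈E} w_{xy} ≥ (τ_min − η) α (1 − α) μ(V). -/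
open BigOperators Matrix Polynomial

lemma aux_top {n : ℕ} (hn : 2 ≤ n) (o : Fin n) (ho : o.1 = 1) (S : Matrix (Fin n) (Fin n) ℝ) (hS : S.IsHermitian)
    (eta : Fin n → ℝ) (hanti : Antitone eta)
    (hchar : S.charpoly = ∏ i, (X - C (eta i))) :
    ∃ g : Fin n → ℝ, ∀ v : Fin n → ℝ, v ⬝ᵥ g = 0 →
      v ⬝ᵥ (S *ᵥ v) ≤ eta o * (v ⬝ᵥ v) := by
  have hms : Multiset.map hS.eigenvalues Finset.univ.val = Multiset.map eta Finset.univ.val := by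
    have h1 := hS.roots_charpoly_eq_eigenvalues
    rw [hchar, Polynomial.roots_prod _ _
      (by simp [Finset.prod_ne_zero_iff, Polynomial.X_sub_C_ne_zero])] at h1
    simp only [Polynomial.roots_X_sub_C, Multiset.bind_singleton] at h1
    exact h1.symm
  let z : Fin n := ⟨0, by omega⟩
  obtain ⟨k, hk⟩ : ∃ k, hS.eigenvalues k = eta z := by
    have : eta z ∈ Multiset.map hS.eigenvalues Finset.univ.val := by
      rw [hms]; exact Multiset.mem_map_of_mem _ (Finset.mem_univ z)
    obtain ⟨k, -, hk⟩ := Multiset.mem_map.1 this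
    exact ⟨k, hk⟩
  have hle : ∀ i, i ≠ k → hS.eigenvalues i ≤ eta o := by
    intro i hi
    have e1 : ∀ a : Fin n, (Finset.univ : Finset (Fin n)).val
        = a ::ₘ (Finset.univ.erase a).val := by
      intro a
      rw [Finset.erase_val, Multiset.cons_erase (Finset.mem_univ a)]
    have h2 := hms
    conv_rhs at h2 => rw [e1 z]
    conv_lhs at h2 => rw [e1 k]
    rw [Multiset.map_cons, Multiset.map_cons, hk, Multiset.cons_inj_right] at h2
    have : hS.eigenvalues i ∈ Multiset.map eta (Finset.univ.erase z).val := by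
      rw [← h2]
      exact Multiset.mem_map_of_mem _ (Finset.mem_erase.2 ⟨hi, Finset.mem_univ i⟩)
    obtain ⟨j, hj, hji⟩ := Multiset.mem_map.1 this
    have hj' : j ≠ z := (Finset.mem_erase.1 (show j ∈ Finset.univ.erase z from hj)).1
    rw [← hji]
    apply hanti
    rw [Fin.le_def]
    have : j.1 ≠ 0 := fun h => hj' (Fin.ext h)
    omega
  refine ⟨(hS.eigenvectorBasis k).ofLp, fun v hv => ?_⟩
  let b := hS.eigenvectorBasis
  have hin : ∀ x y : Fin n → ℝ, inner ℝ (WithLp.toLp 2 x) (WithLp.toLp 2 y) = x ⬝ᵥ y := by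
    intro x y
    simp [PiLp.inner_apply, dotProduct, mul_comm]
  have hexp : ∀ x y : Fin n → ℝ, x ⬝ᵥ y = ∑ i, (x ⬝ᵥ (b i).ofLp) * (y ⬝ᵥ (b i).ofLp) := by
    intro x y
    rw [← hin, ← b.sum_inner_mul_inner]
    refine Finset.sum_congr rfl fun i _ => ?_
    rw [dotProduct_comm y, ← hin, ← hin]
  have hSv : ∀ i, (S *ᵥ v) ⬝ᵥ (b i).ofLp = hS.eigenvalues i * (v ⬝ᵥ (b i).ofLp) := by
    intro i
    have h3 := hS.mulVec_eigenvectorBasis i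
    have hT : Sᵀ = S := by simpa using! hS
    have h4 : S *ᵥ v = v ᵥ* S := by
      conv_lhs => rw [← hT, Matrix.mulVec_transpose]
    rw [h4, ← Matrix.dotProduct_mulVec]
    change v ⬝ᵥ S *ᵥ (hS.eigenvectorBasis i).ofLp = _
    rw [h3]
    simp [b]
  rw [hexp v (S *ᵥ v), hexp v v, Finset.mul_sum]
  refine Finset.sum_le_sum fun i _ => ?_
  rw [hSv]
  by_cases hi : i = k
  · subst hi
    have : v ⬝ᵥ (b i).ofLp = 0 := hv
    simp [this]
  · nlinarith [hle i hi, mul_self_nonneg (v ⬝ᵥ (b i).ofLp),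
      mul_le_mul_of_nonneg_right (hle i hi) (mul_self_nonneg (v ⬝ᵥ (b i).ofLp))]

lemma aux_weighted {n : ℕ} (hn : 2 ≤ n) (o : Fin n) (ho : o.1 = 1)
    (w : Fin n → Fin n → ℝ) (hsymm : ∀ i j, w i j = w j i)
    (μ : Fin n → ℝ) (hμ : ∀ i, 0 < μ i)
    (eta : Fin n → ℝ) (hanti : Antitone eta)
    (hchar : ((Matrix.diagonal μ)⁻¹ * Matrix.of w).charpoly = ∏ i, (X - C (eta i))) :
    ∃ g : Fin n → ℝ, ∀ f : Fin n → ℝ, ∑ i, f i * g i = 0 →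
      ∑ i, ∑ j, w i j * (f i * f j) ≤ eta o * ∑ i, μ i * (f i) ^ 2 := by
  let r : Fin n → ℝ := fun i => (Real.sqrt (μ i))⁻¹
  have hs : ∀ i, 0 < Real.sqrt (μ i) := fun i => Real.sqrt_pos.2 (hμ i)
  have hinv : (Matrix.diagonal μ)⁻¹ = Matrix.diagonal r * Matrix.diagonal r := by
    apply Matrix.inv_eq_right_inv
    rw [Matrix.diagonal_mul_diagonal, Matrix.diagonal_mul_diagonal, ← Matrix.diagonal_one]
    congr 1
    funext i
    have := hs i
    have h2 := Real.mul_self_sqrt (hμ i).le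
    simp only [r]
    field_simp
    nlinarith
  let S : Matrix (Fin n) (Fin n) ℝ := Matrix.diagonal r * Matrix.of w * Matrix.diagonal r
  have hSa : ∀ i j, S i j = r i * w i j * r j := by
    intro i j
    simp [S, Matrix.mul_diagonal, Matrix.diagonal_mul]
  have hS : S.IsHermitian := by
    apply Matrix.IsHermitian.ext
    intro i j
    rw [hSa, hSa, hsymm i j]
    simp
    ring
  have hc : S.charpoly = ∏ i, (X - C (eta i)) := by
    rw [← hchar, hinv, Matrix.mul_assoc, Matrix.charpoly_mul_comm (Matrix.diagonal r)]
  obtain ⟨g, hg⟩ := aux_top hn o ho S hS eta hanti hc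
  refine ⟨fun i => Real.sqrt (μ i) * g i, fun f hf => ?_⟩
  have h := hg (fun i => Real.sqrt (μ i) * f i) (by
    rw [← hf]
    refine Finset.sum_congr rfl fun i _ => by ring)
  have e1 : (fun i => Real.sqrt (μ i) * f i) ⬝ᵥ (S *ᵥ (fun i => Real.sqrt (μ i) * f i))
      = ∑ i, ∑ j, w i j * (f i * f j) := by
    simp only [dotProduct, Matrix.mulVec, Finset.mul_sum]
    refine Finset.sum_congr rfl fun i _ => Finset.sum_congr rfl fun j _ => ?_
    rw [hSa]
    simp only [r]
    have := (hs i).ne'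
    have := (hs j).ne'
    field_simp
  have e2 : (fun i => Real.sqrt (μ i) * f i) ⬝ᵥ (fun i => Real.sqrt (μ i) * f i)
      = ∑ i, μ i * (f i) ^ 2 := by
    refine Finset.sum_congr rfl fun i _ => ?_
    have h2 := Real.mul_self_sqrt (hμ i).le
    simp only
    calc _ = (Real.sqrt (μ i) * Real.sqrt (μ i)) * (f i) ^ 2 := by ring
      _ = _ := by rw [h2]
  rw [e1, e2] at h
  exact h

lemma aux_cut {n : ℕ} (w : Fin n → Fin n → ℝ) (hsymm : ∀ i j, w i j = w j i)
    (A : Finset (Fin n)) (c : ℝ) (f : Fin n → ℝ) (hf : ∀ i, f i = (if i ∈ A then 1 else 0) + c) :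
    ∑ x ∈ A, ∑ y ∈ Aᶜ, w x y
      = ∑ i, (∑ j, w i j) * (f i) ^ 2 - ∑ i, ∑ j, w i j * (f i * f j) := by
  have h1 : ∑ x ∈ A, ∑ y ∈ Aᶜ, w x y
      = ∑ i, ∑ j, w i j * (if i ∈ A then 1 else 0) * (if j ∈ A then 0 else 1) := by
    rw [← Finset.sum_filter_add_sum_filter_not Finset.univ (· ∈ A)
      (fun i => ∑ j, w i j * (if i ∈ A then 1 else 0) * (if j ∈ A then 0 else 1))]
    rw [Finset.sum_eq_zero (s := Finset.univ.filter (¬ · ∈ A)), add_zero,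
      Finset.filter_univ_mem]
    · refine Finset.sum_congr rfl fun i hi => ?_
      rw [← Finset.sum_filter_add_sum_filter_not Finset.univ (· ∈ A)]
      rw [Finset.sum_eq_zero (s := Finset.univ.filter (· ∈ A)), zero_add]
      · have : Finset.univ.filter (¬ · ∈ A) = Aᶜ := by ext; simp
        rw [this]
        refine Finset.sum_congr rfl fun j hj => ?_
        simp [hi, Finset.mem_compl.1 hj]
      · intro j hj
        simp [(Finset.mem_filter.1 hj).2]
    · intro i hi
      simp [(Finset.mem_filter.1 hi).2]
  have h2 : ∑ i, (∑ j, w i j) * (f i) ^ 2 = ∑ i, ∑ j, w i j * (f j) ^ 2 := by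
    rw [Finset.sum_comm]
    refine Finset.sum_congr rfl fun i _ => ?_
    rw [Finset.sum_mul]
    refine Finset.sum_congr rfl fun j _ => by rw [hsymm]
  have h3 : ∑ i, (∑ j, w i j) * (f i) ^ 2 = ∑ i, ∑ j, w i j * (f i) ^ 2 := by
    refine Finset.sum_congr rfl fun i _ => ?_
    rw [Finset.sum_mul]
  have h4 : ∑ i, ∑ j, w i j * (if i ∈ A then 1 else 0) * (if j ∈ A then 0 else 1)
      = ∑ i, ∑ j, w i j * (if j ∈ A then 1 else 0) * (if i ∈ A then (0 : ℝ) else 1) := by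
    rw [Finset.sum_comm]
    refine Finset.sum_congr rfl fun i _ => Finset.sum_congr rfl fun j _ => by rw [hsymm]
  have h5 : ∑ i, ∑ j, w i j * (if i ∈ A then 1 else 0) * (if j ∈ A then (0 : ℝ) else 1)
      + ∑ i, ∑ j, w i j * (if j ∈ A then 1 else 0) * (if i ∈ A then (0 : ℝ) else 1)
      = ∑ i, ∑ j, w i j * (f i) ^ 2 + ∑ i, ∑ j, w i j * (f j) ^ 2
        - 2 * ∑ i, ∑ j, w i j * (f i * f j) := by
    simp only [Finset.mul_sum, ← Finset.sum_add_distrib, ← Finset.sum_sub_distrib]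
    refine Finset.sum_congr rfl fun i _ => Finset.sum_congr rfl fun j _ => ?_
    rw [hf i, hf j]
    split_ifs <;> ring
  linarith

/-- **Expander-mixing type lower bound for the weighted edge boundary.** For a finite weighted
graph with zero potential, `η = max {|η₂|, |η_n|}` for the eigenvalues `η₁ ≥ … ≥ η_n` of the
normalized adjacency matrix `𝒜 = M⁻¹ A` and `τ_min = min_i d(i)/μ_i`, every nonempty proper
subset `A₁ ⊂ V` with `α = μ(A₁)/μ(V)` satisfies
`E(A₁, V∖A₁) ≥ (τ_min - η) α (1 - α) μ(V)`. -/
theorem boundary_lower_bound (n : ℕ) (hn : 2 ≤ n)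
    (G : SimpleGraph (Fin n)) [DecidableRel G.Adj]
    (w : Fin n → Fin n → ℝ) (hsymm : ∀ i j, w i j = w j i)
    (hpos : ∀ i j, G.Adj i j → 0 < w i j) (hzero : ∀ i j, ¬ G.Adj i j → w i j = 0)
    (μ : Fin n → ℝ) (hμ : ∀ i, 0 < μ i)
    (eta : Fin n → ℝ) (hanti : Antitone eta)
    (hchar : ((Matrix.diagonal μ)⁻¹ * Matrix.of w).charpoly = ∏ i, (X - C (eta i)))
    (A₁ : Finset (Fin n)) (hA₁ : A₁.Nonempty) (hA₁' : A₁ ≠ Finset.univ)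
    (α : ℝ) (hα : α = (∑ i ∈ A₁, μ i) / (∑ i, μ i)) :
    ∑ x ∈ A₁, ∑ y ∈ A₁ᶜ, w x y ≥
      ((⨅ i, (∑ j, w i j) / μ i) - max |eta ⟨1, by omega⟩| |eta ⟨n - 1, by omega⟩|) *
        α * (1 - α) * (∑ i, μ i) := by
  obtain ⟨g, hg⟩ := aux_weighted hn ⟨1, by omega⟩ rfl w hsymm μ hμ eta hanti hchar
  have hη : eta ⟨1, by omega⟩ ≤ max |eta ⟨1, by omega⟩| |eta ⟨n - 1, by omega⟩| :=
    (le_abs_self _).trans (le_max_left _ _)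
  set η := max |eta ⟨1, by omega⟩| |eta ⟨n - 1, by omega⟩| with hηdef
  set τ := ⨅ i, (∑ j, w i j) / μ i with hτdef
  have hτ : ∀ i, τ * μ i ≤ ∑ j, w i j := by
    intro i
    rw [← le_div_iff₀ (hμ i)]
    exact ciInf_le (Set.finite_range _).bddBelow i
  have hwnn : ∀ i j, 0 ≤ w i j := by
    intro i j
    by_cases h : G.Adj i j
    · exact (hpos i j h).le
    · rw [hzero i j h]
  have hcut0 : 0 ≤ ∑ x ∈ A₁, ∑ y ∈ A₁ᶜ, w x y :=
    Finset.sum_nonneg fun i _ => Finset.sum_nonneg fun j _ => hwnn i j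
  obtain ⟨a0, ha0⟩ := hA₁
  have hV : 0 < ∑ i, μ i := Finset.sum_pos (fun i _ => hμ i) ⟨a0, Finset.mem_univ _⟩
  have hle : ∑ i ∈ A₁, μ i ≤ ∑ i, μ i :=
    Finset.sum_le_sum_of_subset_of_nonneg (Finset.subset_univ _) fun i _ _ => (hμ i).le
  have hα0 : 0 ≤ α := by
    rw [hα]; exact div_nonneg (Finset.sum_nonneg fun i _ => (hμ i).le) hV.le
  have hα1 : α ≤ 1 := by
    rw [hα]; exact (div_le_one hV).2 hle
  have hαV : ∑ i ∈ A₁, μ i = α * ∑ i, μ i := by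
    rw [hα]; field_simp
  have hP : 0 ≤ α * (1 - α) * ∑ i, μ i :=
    mul_nonneg (mul_nonneg hα0 (by linarith)) hV.le
  -- the general estimate
  have key : ∀ f : Fin n → ℝ, ∑ i, f i * g i = 0 →
      (τ - η) * ∑ i, μ i * (f i) ^ 2
        ≤ ∑ i, (∑ j, w i j) * (f i) ^ 2 - ∑ i, ∑ j, w i j * (f i * f j) := by
    intro f hf
    have h1 := hg f hf
    have h2 : τ * ∑ i, μ i * (f i) ^ 2 ≤ ∑ i, (∑ j, w i j) * (f i) ^ 2 := by
      rw [Finset.mul_sum]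
      refine Finset.sum_le_sum fun i _ => ?_
      rw [← mul_assoc]
      exact mul_le_mul_of_nonneg_right (hτ i) (sq_nonneg _)
    have h3 : 0 ≤ ∑ i, μ i * (f i) ^ 2 :=
      Finset.sum_nonneg fun i _ => mul_nonneg (hμ i).le (sq_nonneg _)
    have h4 := mul_le_mul_of_nonneg_right hη h3
    linarith
  rcases le_or_gt (τ - η) 0 with hneg | hposi
  · have := mul_nonneg_of_nonpos_of_nonpos hneg (neg_nonpos.2 hP)
    nlinarith
  have hg1 : ∑ i, g i ≠ 0 := by
    intro h0
    have h1 := key (fun _ => 1) (by simpa using h0)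
    simp at h1
    nlinarith [mul_pos hposi hV]
  let c : ℝ := -(∑ i ∈ A₁, g i) / ∑ i, g i
  let f : Fin n → ℝ := fun i => (if i ∈ A₁ then 1 else 0) + c
  have hfg : ∑ i, f i * g i = 0 := by
    simp only [f, add_mul, Finset.sum_add_distrib, ← Finset.mul_sum, ite_mul, one_mul, zero_mul,
      Finset.sum_ite_mem, Finset.univ_inter, c]
    field_simp
    ring
  have h1 := key f hfg
  rw [← aux_cut w hsymm A₁ c f (fun _ => rfl)] at h1
  have hn2 : ∑ i, μ i * (f i) ^ 2 = α * (1 - α) * (∑ i, μ i) + (α + c) ^ 2 * ∑ i, μ i := by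
    have : ∀ i, μ i * (f i) ^ 2 = (1 + 2 * c) * (if i ∈ A₁ then μ i else 0) + c ^ 2 * μ i := by
      intro i
      simp only [f]
      split_ifs <;> ring
    simp only [this, Finset.sum_add_distrib, ← Finset.mul_sum, Finset.sum_ite_mem,
      Finset.univ_inter, hαV]
    ring
  have h5 : α * (1 - α) * (∑ i, μ i) ≤ ∑ i, μ i * (f i) ^ 2 := by
    rw [hn2]
    have := mul_nonneg (sq_nonneg (α + c)) hV.le
    linarith
  have h6 := mul_le_mul_of_nonneg_left h5 hposi.le
  have h7 : (τ - η) * α * (1 - α) * (∑ i, μ i) = (τ - η) * (α * (1 - α) * ∑ i, μ i) := by ring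
  rw [ge_iff_le, h7]
  exact h6.trans h1
end
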